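/- arXiv:1705.08379 — 10 statements merged into one kernel-verified Lean document; each statement's English description precedes it below -/
import Mathlib

section
/- Let G be a finite simple graph, P a perfect edge dominating set of G, and (B,Y,W) the 3-coloring of V(G) associated to P. Then every induced triangle of G (three pairwise adjacent vertices) either has all three vertices in B, or has exactly two vertices in Y and one vertex in W. -/
/-- An edge `e` dominates an edge `f` if they share an endpoint (in particular,
every edge dominates itself). -/
def edgeDom {V : Type*} (e f : Sym2 V) : Prop := ∃ v, v ∈ e ∧ v ∈ f

/-- `P` is a perfect edge dominating set of `G`: `P ⊆ E(G)` and every edge of `G`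
not in `P` is dominated by exactly one edge of `P`. -/
def IsPEDS {V : Type*} (G : SimpleGraph V) (P : Set (Sym2 V)) : Prop :=
  P ⊆ G.edgeSet ∧ ∀ f ∈ G.edgeSet, f ∉ P → ∃! e, e ∈ P ∧ edgeDom e f

/-- A black vertex: incident to at least two edges of `P`. -/
def Blackv {V : Type*} (P : Set (Sym2 V)) (v : V) : Prop :=
  ∃ e ∈ P, ∃ f ∈ P, e ≠ f ∧ v ∈ e ∧ v ∈ f

/-- A yellow vertex: incident to exactly one edge of `P`. -/
def Yellowv {V : Type*} (P : Set (Sym2 V)) (v : V) : Prop := ∃! e, e ∈ P ∧ v ∈ e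

/-- A white vertex: incident to no edge of `P`. -/
def Whitev {V : Type*} (P : Set (Sym2 V)) (v : V) : Prop := ∀ e ∈ P, v ∉ e


theorem peds_aux {V : Type*} {G : SimpleGraph V} {P : Set (Sym2 V)} (hP : IsPEDS G P)
    {x y : V} (h : G.Adj x y) (hn : s(x, y) ∉ P) :
    (∃ e ∈ P, x ∈ e ∨ y ∈ e) ∧
    ∀ e ∈ P, ∀ f ∈ P, (x ∈ e ∨ y ∈ e) → (x ∈ f ∨ y ∈ f) → e = f := by
  have key : ∀ e : Sym2 V, edgeDom e s(x, y) ↔ (x ∈ e ∨ y ∈ e) := by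
    intro e
    simp only [edgeDom, Sym2.mem_iff]
    constructor
    · rintro ⟨v, hv, rfl | rfl⟩
      · exact Or.inl hv
      · exact Or.inr hv
    · rintro (hv | hv)
      · exact ⟨x, hv, Or.inl rfl⟩
      · exact ⟨y, hv, Or.inr rfl⟩
  obtain ⟨e, ⟨he, hd⟩, hu⟩ := hP.2 s(x, y) h hn
  refine ⟨⟨e, he, (key e).1 hd⟩, ?_⟩
  intro e' he' f hf h1 h2
  rw [hu e' ⟨he', (key e').2 h1⟩, hu f ⟨hf, (key f).2 h2⟩]

/-- One triangle edge `s(x, y)` in `P`, the other two not. -/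
theorem peds_one {V : Type*} {G : SimpleGraph V} {P : Set (Sym2 V)} (hP : IsPEDS G P)
    {x y z : V} (hxy : G.Adj x y) (hxz : G.Adj x z) (hyz : G.Adj y z)
    (h1 : s(x, y) ∈ P) (h2 : s(x, z) ∉ P) (h3 : s(y, z) ∉ P) :
    Yellowv P x ∧ Yellowv P y ∧ Whitev P z := by
  have A := (peds_aux hP hxz h2).2
  have B := (peds_aux hP hyz h3).2
  refine ⟨⟨s(x, y), ⟨h1, by simp⟩, ?_⟩, ⟨s(x, y), ⟨h1, by simp⟩, ?_⟩, ?_⟩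
  · rintro e ⟨he, hx⟩
    exact A e he _ h1 (Or.inl hx) (by simp)
  · rintro e ⟨he, hx⟩
    exact B e he _ h1 (Or.inl hx) (by simp)
  · intro e he hz
    have := A e he _ h1 (Or.inr hz) (by simp)
    subst this
    rcases Sym2.mem_iff.1 hz with h | h
    · exact hxz.ne h.symm
    · exact hyz.ne h.symm

/-- Two triangle edges in `P` force the third. -/
theorem peds_two {V : Type*} {G : SimpleGraph V} {P : Set (Sym2 V)} (hP : IsPEDS G P)
    {x y z : V} (hyz : G.Adj y z)
    (h1 : s(x, y) ∈ P) (h2 : s(x, z) ∈ P) : s(y, z) ∈ P := by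
  by_contra h3
  have := (peds_aux hP hyz h3).2 _ h1 _ h2 (by simp) (by simp)
  exact hyz.ne (Sym2.congr_right.1 this)

/-- Every induced triangle of `G` either has all three vertices black, or exactly
two yellow vertices and one white vertex, with respect to a perfect edge
dominating set `P`. -/
theorem triangle_coloring {V : Type*} [Fintype V] (G : SimpleGraph V)
    (P : Set (Sym2 V)) (hP : IsPEDS G P) {a b c : V}
    (hab : G.Adj a b) (hac : G.Adj a c) (hbc : G.Adj b c) :
    (Blackv P a ∧ Blackv P b ∧ Blackv P c) ∨
    (Yellowv P a ∧ Yellowv P b ∧ Whitev P c) ∨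
    (Yellowv P a ∧ Whitev P b ∧ Yellowv P c) ∨
    (Whitev P a ∧ Yellowv P b ∧ Yellowv P c) := by
  have sw : ∀ x y : V, s(x, y) = s(y, x) := fun x y => Sym2.eq_swap
  by_cases h1 : s(a, b) ∈ P <;> by_cases h2 : s(a, c) ∈ P <;> by_cases h3 : s(b, c) ∈ P
  · left
    have n1 := hab.ne
    have n2 := hac.ne
    have n3 := hbc.ne
    refine ⟨⟨_, h1, _, h2, ?_, by simp, by simp⟩, ⟨_, h1, _, h3, ?_, by simp, by simp⟩,
      ⟨_, h2, _, h3, ?_, by simp, by simp⟩⟩ <;> simp [Sym2.eq_iff] <;> grind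
  · exact absurd (peds_two hP hbc h1 h2) h3
  · exact absurd (peds_two hP hac (sw a b ▸ h1) h3) h2
  · exact Or.inr (Or.inl (peds_one hP hab hac hbc h1 h2 h3))
  · exact absurd (peds_two hP hab (sw a c ▸ h2) (sw b c ▸ h3)) h1
  · obtain ⟨u, v, w⟩ := peds_one hP hac hab hbc.symm h2 h1 (sw b c ▸ h3)
    exact Or.inr (Or.inr (Or.inl ⟨u, w, v⟩))
  · obtain ⟨u, v, w⟩ := peds_one hP hbc hab.symm hac.symm h3 (sw a b ▸ h1) (sw a c ▸ h2)
    exact Or.inr (Or.inr (Or.inr ⟨w, u, v⟩))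
  · exfalso
    obtain ⟨⟨e1, m1, d1⟩, A⟩ := peds_aux hP hab h1
    obtain ⟨⟨e2, m2, d2⟩, B⟩ := peds_aux hP hac h2
    obtain ⟨⟨e3, m3, d3⟩, C⟩ := peds_aux hP hbc h3
    have k : ∀ x y : V, x ≠ y → s(x, y) ∉ P → ∀ e ∈ P, x ∈ e → y ∈ e → False := by
      intro x y hne hn e he hx hy
      exact hn ((Sym2.mem_and_mem_iff hne).1 ⟨hx, hy⟩ ▸ he)
    have k1 := k a b hab.ne h1
    have k2 := k a c hac.ne h2
    have k3 := k b c hbc.ne h3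
    grind
end

section
/- Let G be a finite simple graph, P a perfect edge dominating set of G, and (B,Y,W) the 3-coloring of V(G) associated to P. Then every vertex belonging to a clique of G on t vertices with t ≥ 4 lies in B. -/
theorem cb_aux {V : Type*} (G : SimpleGraph V) (P : Set (Sym2 V)) (hP : IsPEDS G P)
    (x y : V) (hxy : G.Adj x y) (h : s(x, y) ∉ P) :
    (Whitev P x ∧ ¬ Whitev P y ∧ ¬ Blackv P y) ∨ (Whitev P y ∧ ¬ Whitev P x ∧ ¬ Blackv P x) := by
  obtain ⟨e, ⟨heP, w, hwe, hw⟩, hu⟩ := hP.2 s(x, y) hxy h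
  have hx : ∀ f ∈ P, x ∈ f → f = e := fun f hf hxf => hu f ⟨hf, x, hxf, by simp⟩
  have hy : ∀ f ∈ P, y ∈ f → f = e := fun f hf hyf => hu f ⟨hf, y, hyf, by simp⟩
  have hn : ¬ (x ∈ e ∧ y ∈ e) := by
    intro hh
    exact h (((Sym2.mem_and_mem_iff hxy.ne).1 hh) ▸ heP)
  have hbx : ¬ Blackv P x := by
    rintro ⟨f, hf, g, hg, hne, h1, h2⟩
    exact hne ((hx f hf h1).trans (hx g hg h2).symm)
  have hby : ¬ Blackv P y := by
    rintro ⟨f, hf, g, hg, hne, h1, h2⟩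
    exact hne ((hy f hf h1).trans (hy g hg h2).symm)
  rw [Sym2.mem_iff] at hw
  rcases hw with rfl | rfl
  · right
    exact ⟨fun f hf hyf => hn ⟨hwe, hy f hf hyf ▸ hyf⟩, fun hW => hW e heP hwe, hbx⟩
  · left
    exact ⟨fun f hf hyf => hn ⟨hx f hf hyf ▸ hyf, hwe⟩, fun hW => hW e heP hwe, hby⟩

theorem cb_two {V : Type*} (P : Set (Sym2 V)) (x y z : V) (hyz : y ≠ z)
    (h1 : s(x, y) ∈ P) (h2 : s(x, z) ∈ P) : Blackv P x :=
  ⟨_, h1, _, h2, fun h => hyz (Sym2.congr_right.1 h), by simp, by simp⟩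

theorem cb_core {V : Type*} (G : SimpleGraph V) (P : Set (Sym2 V)) (hP : IsPEDS G P)
    (v a b c : V) (hva : G.Adj v a) (hvb : G.Adj v b) (hvc : G.Adj v c)
    (hne : a ≠ c) (hab : G.Adj a b) (hbc : G.Adj b c) (ha : s(v, a) ∉ P) (hb : s(v, b) ∉ P) :
    Blackv P v := by
  have A1 := cb_aux G P hP v a hva ha
  have A2 := cb_aux G P hP v b hvb hb
  have A3 := cb_aux G P hP v c hvc
  have A4 := cb_aux G P hP a b hab
  have A5 := cb_aux G P hP b c hbc
  have w1 : s(v, c) ∈ P → ¬ Whitev P v := fun h hw => hw _ h (by simp)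
  have w2 : s(a, b) ∈ P → ¬ Whitev P a := fun h hw => hw _ h (by simp)
  by_cases hW : Whitev P v
  · exfalso
    have hac : a ≠ c → s(a, b) ∈ P → s(b, c) ∈ P → Blackv P b := fun h h1 h2 =>
      cb_two P b a c h (by rwa [Sym2.eq_swap]) h2
    have := hac hne
    clear hP
    grind
  · clear hP
    grind

/-- Every vertex of a clique on at least 4 vertices is black with respect to any
perfect edge dominating set. -/
theorem clique_black {V : Type*} [Fintype V] (G : SimpleGraph V)
    (P : Set (Sym2 V)) (hP : IsPEDS G P) (S : Finset V)
    (hclique : G.IsClique (S : Set V)) (hcard : 4 ≤ S.card) :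
    ∀ v ∈ S, Blackv P v := by
  classical
  intro v hv
  have h3 : 2 < (S.erase v).card := by rw [Finset.card_erase_of_mem hv]; omega
  obtain ⟨a, b, c, ha, hb, hc, hab, hac, hbc⟩ := Finset.two_lt_card_iff.1 h3
  rw [Finset.mem_erase] at ha hb hc
  have adj : ∀ x ∈ S, ∀ y ∈ S, x ≠ y → G.Adj x y := fun x hx y hy h => hclique hx hy h
  have va := adj v hv a ha.2 ha.1.symm
  have vb := adj v hv b hb.2 hb.1.symm
  have vc := adj v hv c hc.2 hc.1.symm
  have ab := adj a ha.2 b hb.2 hab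
  have bc := adj b hb.2 c hc.2 hbc
  have ac := adj a ha.2 c hc.2 hac
  by_cases pa : s(v, a) ∈ P
  · by_cases pb : s(v, b) ∈ P
    · exact cb_two P v a b hab pa pb
    · by_cases pc : s(v, c) ∈ P
      · exact cb_two P v a c hac pa pc
      · exact cb_core G P hP v b c a vb vc va hab.symm bc ac.symm pb pc
  · by_cases pb : s(v, b) ∈ P
    · by_cases pc : s(v, c) ∈ P
      · exact cb_two P v b c hbc pb pc
      · exact cb_core G P hP v a c b va vc vb hab ac bc.symm pa pc
    · exact cb_core G P hP v a b c va vb vc hac ab bc pa pb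
end

section
/- Let r ≥ 1 and let G be an r-regular finite simple graph on n vertices. If D is an efficient edge dominating set of G, then |D| = rn/(4r-2). -/
/-- `D` is an efficient edge dominating set of `G`: `D ⊆ E(G)` and every edge
of `G` is dominated by exactly one edge of `D`. -/
def IsEEDS {V : Type*} (G : SimpleGraph V) (D : Set (Sym2 V)) : Prop :=
  D ⊆ G.edgeSet ∧ ∀ f ∈ G.edgeSet, ∃! e, e ∈ D ∧ edgeDom e f

/-- `G` is `r`-regular: every vertex has exactly `r` neighbors. -/
def IsRegular' {V : Type*} (G : SimpleGraph V) (r : ℕ) : Prop :=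
  ∀ v : V, (G.neighborSet v).ncard = r

open Classical in
lemma eeds_aux {V : Type*} [Fintype V] (G : SimpleGraph V) (r : ℕ)
    (hdeg : ∀ v, G.degree v = r) (e : Sym2 V) (he : e ∈ G.edgeSet) :
    (G.edgeFinset.filter (fun f => edgeDom e f)).card + 1 = 2 * r := by
  induction e using Sym2.ind with
  | _ a b =>
  have hab : G.Adj a b := he
  have h1 : G.edgeFinset.filter (fun f => edgeDom s(a, b) f)
      = G.incidenceFinset a ∪ G.incidenceFinset b := by
    ext f
    simp only [Finset.mem_filter, SimpleGraph.mem_edgeFinset, Finset.mem_union,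
      SimpleGraph.mem_incidenceFinset, SimpleGraph.incidenceSet, Set.mem_ofPred_eq, edgeDom,
      Sym2.mem_iff]
    constructor
    · rintro ⟨hf, v, rfl | rfl, hv⟩
      · exact Or.inl ⟨hf, hv⟩
      · exact Or.inr ⟨hf, hv⟩
    · rintro (⟨hf, hv⟩ | ⟨hf, hv⟩)
      · exact ⟨hf, a, Or.inl rfl, hv⟩
      · exact ⟨hf, b, Or.inr rfl, hv⟩
  have h2 : G.incidenceFinset a ∩ G.incidenceFinset b = {s(a, b)} := by
    ext f
    have := Set.ext_iff.1 (G.incidenceSet_inter_incidenceSet_of_adj hab) f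
    simpa using this
  have h3 := Finset.card_union_add_card_inter (G.incidenceFinset a) (G.incidenceFinset b)
  rw [h2, ← h1, SimpleGraph.card_incidenceFinset_eq_degree,
    SimpleGraph.card_incidenceFinset_eq_degree, hdeg, hdeg, Finset.card_singleton] at h3
  omega

open Classical in
/-- If `G` is an `r`-regular graph (`r ≥ 1`) on `n` vertices and `D` is an
efficient edge dominating set of `G`, then `|D| = r n / (4 r - 2)`. -/
lemma eeds_main {V : Type*} [Fintype V] (G : SimpleGraph V) (r : ℕ) (hr : 1 ≤ r)
    (hreg : IsRegular' G r) (D : Set (Sym2 V)) (hD : IsEEDS G D) :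
    (D.ncard : ℚ) = (r * Fintype.card V : ℚ) / (4 * r - 2) := by
  have hdeg : ∀ v, G.degree v = r := by
    intro v
    rw [← hreg v, Set.ncard_eq_toFinset_card', ← SimpleGraph.card_neighborFinset_eq_degree]
    rfl
  obtain ⟨hsub, hex⟩ := hD
  have hsum := G.sum_degrees_eq_twice_card_edges
  simp only [hdeg, Finset.sum_const, Finset.card_univ, smul_eq_mul] at hsum
  have hdc := Finset.sum_card_bipartiteAbove_eq_sum_card_bipartiteBelow
    (s := D.toFinset) (t := G.edgeFinset) (fun e f => edgeDom e f)
  have hR : ∑ f ∈ G.edgeFinset, (D.toFinset.bipartiteBelow (fun e f => edgeDom e f) f).card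
      = G.edgeFinset.card := by
    rw [Finset.card_eq_sum_ones]
    refine Finset.sum_congr rfl fun f hf => ?_
    obtain ⟨e, he, hu⟩ := hex f (SimpleGraph.mem_edgeFinset.1 hf)
    rw [Finset.card_eq_one]
    refine ⟨e, ?_⟩
    ext x
    simp only [Finset.bipartiteBelow, Finset.mem_filter, Set.mem_toFinset, Finset.mem_singleton]
    exact ⟨fun h => hu x h, fun h => h ▸ he⟩
  have hL : ∑ e ∈ D.toFinset, (G.edgeFinset.bipartiteAbove (fun e f => edgeDom e f) e).card
      = D.ncard * (2 * r - 1) := by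
    rw [Set.ncard_eq_toFinset_card', ← smul_eq_mul]
    refine Finset.sum_const_nat fun e he => ?_
    have := eeds_aux G r hdeg e (hsub (Set.mem_toFinset.1 he))
    have h2 : (G.edgeFinset.bipartiteAbove (fun e f => edgeDom e f) e).card + 1 = 2 * r := by
      convert this
      ext f
      simp [Finset.bipartiteAbove]
    omega
  rw [hL, hR] at hdc
  rw [← hdc] at hsum
  have hr' : (1 : ℚ) ≤ r := by exact_mod_cast hr
  have hq : (Fintype.card V : ℚ) * r = 2 * (D.ncard * (2 * r - 1)) := by
    have := congrArg (Nat.cast : ℕ → ℚ) hsum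
    push_cast [Nat.cast_sub (show 1 ≤ 2 * r by omega)] at this
    exact this
  rw [eq_div_iff (by linarith)]
  linarith

/-- If `G` is an `r`-regular graph (`r ≥ 1`) on `n` vertices and `D` is an
efficient edge dominating set of `G`, then `|D| = r n / (4 r - 2)`. -/
theorem eeds_card {V : Type*} [Fintype V] (G : SimpleGraph V) (r : ℕ) (hr : 1 ≤ r)
    (hreg : IsRegular' G r) (D : Set (Sym2 V)) (hD : IsEEDS G D) :
    (D.ncard : ℚ) = (r * Fintype.card V : ℚ) / (4 * r - 2) :=
  eeds_main G r hr hreg D hD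
end

section
/- The perfect edge dominating sets of the shield graph are exactly the following five sets of edges: (i) the efficient edge dominating set {v2v4, v6v8, v10v12}; (ii) the three proper sets {v3v4, v6v7, v9v10, v10v11, v11v12, v12v1, v10v12}, {v2v3, v5v6, v6v7, v7v8, v8v9, v6v8, v11v12}, and {v1v2, v2v3, v3v4, v4v5, v2v4, v7v8, v10v11}; and (iii) the full edge set of the shield graph. -/
/-- The shield graph: the vertex `vᵢ` of the paper corresponds to `i - 1 : Fin 12`.
Its edges are the 12-cycle `v₁v₂, …, v₁₁v₁₂, v₁₂v₁` together with the three
chords `v₂v₄, v₆v₈, v₁₀v₁₂`. -/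
def Shield : SimpleGraph (Fin 12) :=
  SimpleGraph.fromRel (fun i j =>
    j = i + 1 ∨ (i = 1 ∧ j = 3) ∨ (i = 5 ∧ j = 7) ∨ (i = 9 ∧ j = 11))

def shE : Fin 15 → Sym2 (Fin 12) := ![s(0, 1), s(1, 2), s(2, 3), s(3, 4), s(4, 5), s(5, 6), s(6, 7), s(7, 8), s(8, 9), s(9, 10), s(10, 11), s(11, 0), s(1, 3), s(5, 7), s(9, 11)]

def ok1 (a : Bool) (l : List Bool) : Bool := a || (l.count true == 1)

def adjB (i j : Fin 15) : Bool := decide (∃ v, v ∈ shE i ∧ v ∈ shE j)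

def toP (p : Fin 15 → Bool) : Set (Sym2 (Fin 12)) := {e | ∃ i, p i = true ∧ shE i = e}

def sols : List (Fin 15 → Bool) := [
  ![false, false, false, false, false, false, false, false, false, false, false, false, true, true, true],
  ![false, false, true, false, false, true, false, false, true, true, true, true, false, false, true],
  ![false, true, false, false, true, true, true, true, false, false, true, false, false, true, false],
  ![true, true, true, true, false, false, true, false, false, true, false, false, true, false, false],
  ![true, true, true, true, true, true, true, true, true, true, true, true, true, true, true]]

theorem core_search : ∀ b12 : Bool, 
    ∀ b0 : Bool, 
    ∀ b1 : Bool, 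
    ∀ b2 : Bool, ok1 (b1) [b0, b2, b12] = true → 
    ∀ b3 : Bool, ok1 (b12) [b0, b1, b2, b3] = true → ok1 (b2) [b1, b3, b12] = true → 
    ∀ b11 : Bool, ok1 (b0) [b1, b11, b12] = true → 
    ∀ b4 : Bool, ok1 (b3) [b2, b4, b12] = true → 
    ∀ b13 : Bool, 
    ∀ b5 : Bool, ok1 (b4) [b3, b5, b13] = true → 
    ∀ b6 : Bool, ok1 (b5) [b4, b6, b13] = true → 
    ∀ b7 : Bool, ok1 (b13) [b4, b5, b6, b7] = true → ok1 (b6) [b5, b7, b13] = true → 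
    ∀ b8 : Bool, ok1 (b7) [b6, b8, b13] = true → 
    ∀ b14 : Bool, 
    ∀ b9 : Bool, ok1 (b8) [b7, b9, b14] = true → 
    ∀ b10 : Bool, ok1 (b11) [b0, b10, b14] = true → ok1 (b14) [b8, b9, b10, b11] = true → ok1 (b9) [b8, b10, b14] = true → ok1 (b10) [b9, b11, b14] = true → 
    (![b0, b1, b2, b3, b4, b5, b6, b7, b8, b9, b10, b11, b12, b13, b14] : Fin 15 → Bool) ∈ sols := by
  decide +kernel

theorem shE_inj : Function.Injective shE := by
  unfold Function.Injective
  decide +kernel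

theorem mem_shield (e : Sym2 (Fin 12)) : e ∈ Shield.edgeSet ↔ ∃ i, shE i = e := by
  induction e using Sym2.ind with
  | _ x y =>
    rw [SimpleGraph.mem_edgeSet, Shield, SimpleGraph.fromRel_adj]
    revert x y
    decide +kernel

theorem shE_mem_toP (p : Fin 15 → Bool) (i : Fin 15) : shE i ∈ toP p ↔ p i = true := by
  constructor
  · rintro ⟨j, hj, h⟩
    rwa [← shE_inj h]
  · exact fun h => ⟨i, h, rfl⟩

theorem toP_sub (p : Fin 15 → Bool) : toP p ⊆ Shield.edgeSet := by
  rintro e ⟨i, -, rfl⟩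
  exact (mem_shield _).2 ⟨i, rfl⟩

theorem uniq_iff (p : Fin 15 → Bool) (i : Fin 15) :
    (∃! e, e ∈ toP p ∧ edgeDom e (shE i)) ↔ ∃! j, p j = true ∧ adjB j i = true := by
  have ha : ∀ j, edgeDom (shE j) (shE i) ↔ adjB j i = true := by
    intro j
    simp [adjB, edgeDom]
  constructor
  · rintro ⟨e, ⟨⟨j, hj, rfl⟩, hd⟩, hu⟩
    refine ⟨j, ⟨hj, (ha j).1 hd⟩, ?_⟩
    rintro k ⟨hk, hk2⟩
    exact shE_inj (hu _ ⟨⟨k, hk, rfl⟩, (ha k).2 hk2⟩)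
  · rintro ⟨j, ⟨hj, hd⟩, hu⟩
    refine ⟨shE j, ⟨⟨j, hj, rfl⟩, (ha j).2 hd⟩, ?_⟩
    rintro e ⟨⟨k, hk, rfl⟩, hk2⟩
    rw [hu k ⟨hk, (ha k).1 hk2⟩]

theorem peds_iff (p : Fin 15 → Bool) : IsPEDS Shield (toP p) ↔
    ∀ i, p i = false → ∃! j, p j = true ∧ adjB j i = true := by
  constructor
  · rintro ⟨-, h⟩ i hi
    refine (uniq_iff p i).1 (h _ ((mem_shield _).2 ⟨i, rfl⟩) ?_)
    rw [shE_mem_toP, hi]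
    simp
  · intro h
    refine ⟨toP_sub p, ?_⟩
    intro f hf hn
    obtain ⟨i, rfl⟩ := (mem_shield _).1 hf
    refine (uniq_iff p i).2 (h i ?_)
    rw [shE_mem_toP] at hn
    simpa using hn

theorem ok_of (p : Fin 15 → Bool) (h : ∀ i, p i = false → ∃! j, p j = true ∧ adjB j i = true)
    (i : Fin 15) (l : List (Fin 15)) (hl : l.Nodup)
    (hm : ∀ j, j ∈ l ↔ j ≠ i ∧ adjB j i = true) : ok1 (p i) (l.map p) = true := by
  unfold ok1
  by_cases hi : p i = true
  · simp [hi]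
  · have hi2 : p i = false := by simpa using hi
    obtain ⟨j, ⟨hj, hd⟩, hu⟩ := h i hi2
    have hjl : j ∈ l := (hm j).2 ⟨fun e => hi (e ▸ hj), hd⟩
    have hf : l.countP (fun k => p k == true) = l.count j := by
      unfold List.count
      refine List.countP_congr ?_
      intro k hk
      constructor
      · intro h1
        have := hu k ⟨by simpa using h1, ((hm k).1 hk).2⟩
        simp [this]
      · intro h1
        have : k = j := by simpa using h1
        simp [this, hj]
    have h1 : (l.map p).count true = 1 := by
      rw [List.count, List.countP_map]
      refine Eq.trans ?_ (List.count_eq_one_of_mem hl hjl)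
      exact hf
    simp [h1]

theorem sols_of (p : Fin 15 → Bool) (h : ∀ i, p i = false → ∃! j, p j = true ∧ adjB j i = true) :
    p ∈ sols := by
  have key := ok_of p h
  have hp : p = ![p 0, p 1, p 2, p 3, p 4, p 5, p 6, p 7, p 8, p 9, p 10, p 11, p 12, p 13, p 14] := by
    funext i
    fin_cases i <;> rfl
  rw [hp]
  exact core_search (p 12) (p 0) (p 1) (p 2) (key 1 [0, 2, 12] (by decide) (by decide)) (p 3) (key 12 [0, 1, 2, 3] (by decide) (by decide)) (key 2 [1, 3, 12] (by decide) (by decide)) (p 11) (key 0 [1, 11, 12] (by decide) (by decide)) (p 4) (key 3 [2, 4, 12] (by decide) (by decide)) (p 13) (p 5) (key 4 [3, 5, 13] (by decide) (by decide)) (p 6) (key 5 [4, 6, 13] (by decide) (by decide)) (p 7) (key 13 [4, 5, 6, 7] (by decide) (by decide)) (key 6 [5, 7, 13] (by decide) (by decide)) (p 8) (key 7 [6, 8, 13] (by decide) (by decide)) (p 14) (p 9) (key 8 [7, 9, 14] (by decide) (by decide)) (p 10) (key 11 [0, 10, 14] (by decide) (by decide)) (key 14 [8, 9, 10, 11] (by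 decide) (by decide)) (key 9 [8, 10, 14] (by decide) (by decide)) (key 10 [9, 11, 14] (by decide) (by decide))

theorem sols_peds : ∀ p ∈ sols, ∀ i, p i = false → ∃! j, p j = true ∧ adjB j i = true := by
  intro p hp
  simp only [sols, List.mem_cons, List.not_mem_nil, or_false] at hp
  unfold ExistsUnique
  rcases hp with rfl | rfl | rfl | rfl | rfl <;> decide +kernel

theorem toP_sol {p : Fin 15 → Bool} {l : List (Fin 15)} (h : ∀ i, p i = true ↔ i ∈ l) :
    toP p = {e | e ∈ l.map shE} := by
  ext e
  simp [toP, h]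

theorem set0 : ({s(1, 3), s(5, 7), s(9, 11)} : Set (Sym2 (Fin 12))) =
    toP ![false, false, false, false, false, false, false, false, false, false, false, false, true, true, true] := by
  rw [toP_sol (l := [12, 13, 14]) (by decide)]
  ext e
  simp [shE]

theorem set1 : ({s(2, 3), s(5, 6), s(8, 9), s(9, 10), s(10, 11), s(11, 0), s(9, 11)} : Set (Sym2 (Fin 12))) =
    toP ![false, false, true, false, false, true, false, false, true, true, true, true, false, false, true] := by
  rw [toP_sol (l := [2, 5, 8, 9, 10, 11, 14]) (by decide)]
  ext e
  simp [shE]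

theorem set2 : ({s(1, 2), s(4, 5), s(5, 6), s(6, 7), s(7, 8), s(5, 7), s(10, 11)} : Set (Sym2 (Fin 12))) =
    toP ![false, true, false, false, true, true, true, true, false, false, true, false, false, true, false] := by
  rw [toP_sol (l := [1, 4, 5, 6, 7, 13, 10]) (by decide)]
  ext e
  simp [shE]

theorem set3 : ({s(0, 1), s(1, 2), s(2, 3), s(3, 4), s(1, 3), s(6, 7), s(9, 10)} : Set (Sym2 (Fin 12))) =
    toP ![true, true, true, true, false, false, true, false, false, true, false, false, true, false, false] := by
  rw [toP_sol (l := [0, 1, 2, 3, 12, 6, 9]) (by decide)]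
  ext e
  simp [shE]

theorem set4 : Shield.edgeSet = toP ![true, true, true, true, true, true, true, true, true, true, true, true, true, true, true] := by
  ext e
  rw [mem_shield]
  have : ∀ i, (![true, true, true, true, true, true, true, true, true, true, true, true, true, true, true] : Fin 15 → Bool) i = true := by decide
  simp only [toP, this, true_and, Set.mem_ofPred_eq]

/-- The perfect edge dominating sets of the shield graph are exactly: the
efficient edge dominating set `{v₂v₄, v₆v₈, v₁₀v₁₂}`, three proper perfect edge
dominating sets, and the full edge set. -/
theorem shield_peds :
    (∀ P : Set (Sym2 (Fin 12)), IsPEDS Shield P ↔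
      (P = {s(1, 3), s(5, 7), s(9, 11)} ∨
       P = {s(2, 3), s(5, 6), s(8, 9), s(9, 10), s(10, 11), s(11, 0), s(9, 11)} ∨
       P = {s(1, 2), s(4, 5), s(5, 6), s(6, 7), s(7, 8), s(5, 7), s(10, 11)} ∨
       P = {s(0, 1), s(1, 2), s(2, 3), s(3, 4), s(1, 3), s(6, 7), s(9, 10)} ∨
       P = Shield.edgeSet)) ∧
    IsEEDS Shield {s(1, 3), s(5, 7), s(9, 11)} := by
  rw [set0, set1, set2, set3, set4]
  refine ⟨fun P => ⟨fun hP => ?_, fun hP => ?_⟩, toP_sub _, ?_⟩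
  · classical
    have e : P = toP (fun i => decide (shE i ∈ P)) := by
      ext e
      constructor
      · intro he
        obtain ⟨i, rfl⟩ := (mem_shield _).1 (hP.1 he)
        exact ⟨i, by simpa using he, rfl⟩
      · rintro ⟨i, hi, rfl⟩
        simpa using hi
    generalize (fun i => decide (shE i ∈ P)) = p at e
    subst e
    have h := sols_of p ((peds_iff p).1 hP)
    simp only [sols, List.mem_cons, List.not_mem_nil, or_false] at h
    rcases h with h | h | h | h | h <;> simp only [h, true_or, or_true]
  · rcases hP with h | h | h | h | h <;> rw [h, peds_iff] <;>
      exact sols_peds _ (by simp [sols])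
  · intro f hf
    obtain ⟨i, rfl⟩ := (mem_shield _).1 hf
    rw [uniq_iff]
    clear hf
    revert i
    unfold ExistsUnique
    decide +kernel
end

section
/- Let G be a cubic (3-regular) finite simple graph on n vertices. Then the magnification M(G) is claw-free, has maximum degree at most 3, has exactly 12n vertices, and has exactly 33n/2 edges. -/
/-- The contact vertices `v₃, v₇, v₁₁` of the shield graph. -/
def Contacts : Set (Fin 12) := {2, 6, 10}

/-- A graph is claw-free if it has no induced `K_{1,3}`. -/
def ClawFree {W : Type*} (H : SimpleGraph W) : Prop :=
  ¬ ∃ a b c d : W, H.Adj a b ∧ H.Adj a c ∧ H.Adj a d ∧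
    b ≠ c ∧ b ≠ d ∧ c ≠ d ∧ ¬ H.Adj b c ∧ ¬ H.Adj b d ∧ ¬ H.Adj c d

/-- `H` (on vertex set `V × Fin 12`) is the magnification of the cubic graph `G`,
witnessed by the contact-assignment `f`: each vertex `v` of `G` is replaced by a
copy `{v} × Fin 12` of the shield graph, and each edge `uv` of `G` is replaced by
a single edge joining the contact vertex `f u v` of the copy of `u` to the contact
vertex `f v u` of the copy of `v`, with each of the three contact vertices of every
copy used for exactly one such edge. -/
def IsMagnification {V : Type*} (G : SimpleGraph V) (f : V → V → Fin 12)
    (H : SimpleGraph (V × Fin 12)) : Prop :=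
  (∀ v u, G.Adj v u → f v u ∈ Contacts) ∧
  (∀ v, Set.InjOn (f v) (G.neighborSet v)) ∧
  (∀ v, ∀ c ∈ Contacts, ∃ u, G.Adj v u ∧ f v u = c) ∧
  (∀ a b : V × Fin 12, H.Adj a b ↔
    ((a.1 = b.1 ∧ Shield.Adj a.2 b.2) ∨
     (G.Adj a.1 b.1 ∧ f a.1 b.1 = a.2 ∧ f b.1 a.1 = b.2)))

instance shieldDec : DecidableRel Shield.Adj := fun i j =>
  decidable_of_iff (i ≠ j ∧
    ((j = i + 1 ∨ (i = 1 ∧ j = 3) ∨ (i = 5 ∧ j = 7) ∨ (i = 9 ∧ j = 11)) ∨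
     (i = j + 1 ∨ (j = 1 ∧ i = 3) ∨ (j = 5 ∧ i = 7) ∨ (j = 9 ∧ i = 11))))
    (by simp only [Shield, SimpleGraph.fromRel_adj])

instance contactsDec : DecidablePred (· ∈ Contacts) := fun i =>
  decidable_of_iff (i = 2 ∨ i = 6 ∨ i = 10) (by simp [Contacts])

set_option maxRecDepth 100000 in
set_option synthInstance.maxSize 4000 in
set_option synthInstance.maxHeartbeats 400000 in
set_option maxHeartbeats 1000000 in
theorem shield_claw : ∀ i j : Fin 12, Shield.Adj i j → ∀ k, Shield.Adj i k → j ≠ k →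
    ¬ Shield.Adj j k → ∀ l, Shield.Adj i l → j ≠ l → k ≠ l → ¬ Shield.Adj j l →
    ¬ Shield.Adj k l → False := by decide

set_option maxRecDepth 100000 in
theorem shield_contact : ∀ i : Fin 12, i ∈ Contacts → ∀ j, Shield.Adj i j → ∀ k, Shield.Adj i k →
    j ≠ k → Shield.Adj j k := by decide

def extDeg (i : Fin 12) : ℕ := if i ∈ Contacts then 1 else 0

set_option maxRecDepth 100000 in
theorem shield_deg : ∀ i : Fin 12, Shield.degree i + extDeg i ≤ 3 := by decide

set_option maxRecDepth 100000 in
theorem shield_sum : ∑ i : Fin 12, (Shield.degree i + extDeg i) = 33 := by decide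

theorem mag_ncard {V : Type*} [Fintype V] (G : SimpleGraph V)
    (f : V → V → Fin 12) (H : SimpleGraph (V × Fin 12))
    (hmag : IsMagnification G f H) (x : V × Fin 12) :
    (H.neighborSet x).ncard = Shield.degree x.2 + extDeg x.2 := by
  obtain ⟨h1, h2, h3, h4⟩ := hmag
  obtain ⟨v, i⟩ := x
  have hset : H.neighborSet (v, i) = (fun j => (v, j)) '' Shield.neighborSet i ∪
      (fun u => (u, f u v)) '' {u | G.Adj v u ∧ f v u = i} := by
    ext ⟨w, j⟩
    simp only [SimpleGraph.mem_neighborSet, h4, Set.mem_union, Set.mem_image, Set.mem_ofPred_eq,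
      Prod.mk.injEq]
    constructor
    · rintro (⟨h, h'⟩ | ⟨h, h', h''⟩)
      · exact Or.inl ⟨j, h', h, rfl⟩
      · exact Or.inr ⟨w, ⟨h, h'⟩, rfl, h''⟩
    · rintro (⟨k, h, h', rfl⟩ | ⟨k, ⟨h, h'⟩, rfl, h''⟩)
      · exact Or.inl ⟨h', h⟩
      · exact Or.inr ⟨h, h', h''⟩
  rw [hset, Set.ncard_union_eq ?_ (Set.toFinite _) (Set.toFinite _)]
  · rw [Set.ncard_image_of_injective _ (fun a b h => (Prod.mk.inj h).2),
      Set.ncard_image_of_injective _ (fun a b h => (Prod.mk.inj h).1)]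
    congr 1
    · rw [Set.ncard_eq_toFinset_card', ← SimpleGraph.card_neighborFinset_eq_degree]
      rfl
    · unfold extDeg
      split_ifs with hi
      · obtain ⟨u, hu, hu'⟩ := h3 v i hi
        rw [Set.ncard_eq_one]
        refine ⟨u, ?_⟩
        ext w
        constructor
        · rintro ⟨hw, hw'⟩
          exact h2 v hw hu (hw'.trans hu'.symm)
        · rintro rfl
          exact ⟨hu, hu'⟩
      · rw [Set.ncard_eq_zero]
        ext w
        simp only [Set.mem_ofPred_eq, Set.mem_empty_iff_false, iff_false]
        rintro ⟨hw, rfl⟩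
        exact hi (h1 v w hw)
  · rw [Set.disjoint_left]
    rintro _ ⟨j, hj, rfl⟩ ⟨u, ⟨hu, _⟩, h⟩
    have := (Prod.mk.inj h).1
    exact hu.ne this.symm

theorem mag_claw {V : Type*} (G : SimpleGraph V)
    (f : V → V → Fin 12) (H : SimpleGraph (V × Fin 12))
    (hmag : IsMagnification G f H) : ClawFree H := by
  obtain ⟨h1, h2, h3, h4⟩ := hmag
  rintro ⟨⟨v, i⟩, ⟨b, j⟩, ⟨c, k⟩, ⟨d, l⟩, hb, hc, hd, hbc, hbd, hcd, nbc, nbd, ncd⟩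
  -- two external neighbours coincide
  have ext2 : ∀ u w j k, G.Adj v u ∧ f v u = i ∧ f u v = j → G.Adj v w ∧ f v w = i ∧ f w v = k →
      (u, j) ≠ (w, k) → False := by
    rintro u w j k ⟨a1, a2, a3⟩ ⟨b1, b2, b3⟩ hne
    have : u = w := h2 v a1 b1 (a2.trans b2.symm)
    subst this
    exact hne (by rw [← a3, ← b3])
  -- an external neighbour and two internal ones
  have ext1 : ∀ u j k l, G.Adj v u ∧ f v u = i ∧ f u v = j → Shield.Adj i k → Shield.Adj i l →
      (v, k) ≠ (v, l) → ¬ H.Adj (v, k) (v, l) → False := by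
    rintro u j k l ⟨a1, a2, a3⟩ hk hl hne hn
    refine hn ((h4 _ _).2 (Or.inl ⟨rfl, ?_⟩))
    exact shield_contact i (a2 ▸ h1 v u a1) k hk l hl (fun h => hne (by rw [h]))
  rcases (h4 _ _).1 hb with ⟨eb, sb⟩ | eb <;> rcases (h4 _ _).1 hc with ⟨ec, sc⟩ | ec <;>
    rcases (h4 _ _).1 hd with ⟨ed, sd⟩ | ed <;> dsimp only at *
  · subst eb ec ed
    refine shield_claw i j sb k sc (fun h => hbc (by rw [h])) (fun h => nbc ?_) l sd
      (fun h => hbd (by rw [h])) (fun h => hcd (by rw [h])) (fun h => nbd ?_) (fun h => ncd ?_)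
    all_goals exact (h4 _ _).2 (Or.inl ⟨rfl, h⟩)
  · subst eb ec
    exact ext1 _ _ _ _ ed sb sc hbc nbc
  · subst eb ed
    exact ext1 _ _ _ _ ec sb sd hbd nbd
  · exact ext2 _ _ _ _ ec ed hcd
  · subst ec ed
    exact ext1 _ _ _ _ eb sc sd hcd ncd
  · exact ext2 _ _ _ _ eb ed hbd
  · exact ext2 _ _ _ _ eb ec hbc
  · exact ext2 _ _ _ _ eb ec hbc

/-- The magnification of a cubic graph on `n` vertices is claw-free, has maximum
degree at most `3`, has exactly `12 n` vertices, and exactly `33 n / 2` edges. -/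
theorem magnification_props {V : Type*} [Fintype V] (G : SimpleGraph V)
    (hcubic : IsRegular' G 3) (f : V → V → Fin 12) (H : SimpleGraph (V × Fin 12))
    (hmag : IsMagnification G f H) :
    ClawFree H ∧ (∀ x : V × Fin 12, (H.neighborSet x).ncard ≤ 3) ∧
    Fintype.card (V × Fin 12) = 12 * Fintype.card V ∧
    2 * H.edgeSet.ncard = 33 * Fintype.card V := by
  classical
  have hn := mag_ncard G f H hmag
  refine ⟨mag_claw G f H hmag, fun x => ?_, ?_, ?_⟩
  · rw [hn]
    exact shield_deg x.2
  · rw [Fintype.card_prod, Fintype.card_fin, mul_comm]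
  · have hs := H.sum_degrees_eq_twice_card_edges
    have he : H.edgeSet.ncard = H.edgeFinset.card := by
      rw [Set.ncard_eq_toFinset_card']
      rfl
    rw [he, ← hs]
    have hd : ∀ x, H.degree x = Shield.degree x.2 + extDeg x.2 := by
      intro x
      rw [← hn, Set.ncard_eq_toFinset_card', ← SimpleGraph.card_neighborFinset_eq_degree]
      rfl
    rw [Finset.sum_congr rfl (fun x _ => hd x), Fintype.sum_prod_type]
    simp only [shield_sum]
    rw [Finset.sum_const, Finset.card_univ, smul_eq_mul, mul_comm]
end

section
/- Let G be a connected finite simple graph in which every vertex is contained in some triangle. Then G admits no proper perfect edge dominating set; that is, every perfect edge dominating set of G is either an efficient edge dominating set or the full edge set E(G). -/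
theorem peds_closed {V : Type*} (G : SimpleGraph V)
    (htri : ∀ v : V, ∃ a b : V, G.Adj v a ∧ G.Adj v b ∧ G.Adj a b)
    (P : Set (Sym2 V)) (hP : IsPEDS G P) (b y : V) (hby : G.Adj b y)
    (hb : ∃ x z, x ≠ z ∧ s(b, x) ∈ P ∧ s(b, z) ∈ P) :
    ∃ x z, x ≠ z ∧ s(y, x) ∈ P ∧ s(y, z) ∈ P := by
  obtain ⟨hsub, hdom⟩ := hP
  have hB : ∀ w, G.Adj b w → s(b, w) ∈ P := by
    intro w hw
    by_contra hn
    obtain ⟨x, z, hxz, hx, hz⟩ := hb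
    have := (hdom s(b, w) hw hn).unique ⟨hx, b, by simp, by simp⟩ ⟨hz, b, by simp, by simp⟩
    exact hxz (Sym2.congr_right.mp this)
  have hyb : s(y, b) ∈ P := by rw [Sym2.eq_swap]; exact hB y hby
  by_contra hny
  have huniq : ∀ x, s(y, x) ∈ P → x = b := by
    intro x hx
    by_contra hne
    exact hny ⟨x, b, hne, hx, hyb⟩
  have hW : ∀ a, G.Adj y a → s(y, a) ∉ P → ∀ e ∈ P, a ∉ e := by
    intro a ha hna e he hae
    have h1 := (hdom s(y, a) ha hna).unique ⟨he, a, hae, by simp⟩ ⟨hyb, y, by simp, by simp⟩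
    rw [h1, Sym2.mem_iff] at hae
    rcases hae with h | h
    · exact ha.ne h.symm
    · exact hna (h ▸ hyb)
  have main : ∀ a c, G.Adj y a → G.Adj y c → G.Adj a c → s(y, a) ∉ P → False := by
    intro a c ha hc hac hna
    by_cases hyc : s(y, c) ∈ P
    · have := huniq c hyc
      subst this
      exact hW a ha hna _ (hB a hac.symm) (by simp)
    · have hacP : s(a, c) ∉ P := fun h => hW a ha hna _ h (by simp)
      obtain ⟨e, ⟨he, v, hve, hv⟩, -⟩ := hdom s(a, c) hac hacP
      rcases Sym2.mem_iff.mp hv with h | h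
      · exact hW a ha hna e he (h ▸ hve)
      · exact hW c hc hyc e he (h ▸ hve)
  obtain ⟨a, c, ha, hc, hac⟩ := htri y
  by_cases h1 : s(y, a) ∈ P
  · by_cases h2 : s(y, c) ∈ P
    · exact hac.ne ((huniq a h1).trans (huniq c h2).symm)
    · exact main c a hc ha hac.symm h2
  · exact main a c ha hc hac h1

/-- In a connected graph in which every vertex lies in a triangle, every perfect
edge dominating set is either an efficient edge dominating set or the full
edge set. -/
theorem no_proper_peds {V : Type*} [Fintype V] (G : SimpleGraph V)
    (hconn : G.Connected)
    (htri : ∀ v : V, ∃ a b : V, G.Adj v a ∧ G.Adj v b ∧ G.Adj a b)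
    (P : Set (Sym2 V)) (hP : IsPEDS G P) :
    IsEEDS G P ∨ P = G.edgeSet := by
  by_cases h : ∃ b x z, x ≠ z ∧ s(b, x) ∈ P ∧ s(b, z) ∈ P
  · right
    obtain ⟨b, hb⟩ := h
    have hall : ∀ v, ∃ x z, x ≠ z ∧ s(v, x) ∈ P ∧ s(v, z) ∈ P := by
      intro v
      obtain ⟨w⟩ := hconn.preconnected b v
      induction w with
      | nil => exact hb
      | cons hadj _ ih => exact ih (peds_closed G htri P hP _ _ hadj hb)
    refine Set.Subset.antisymm hP.1 ?_
    intro e he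
    by_contra hn
    induction e using Sym2.ind with
    | _ u v =>
      obtain ⟨x, z, hxz, hx, hz⟩ := hall u
      have := (hP.2 s(u, v) he hn).unique ⟨hx, u, by simp, by simp⟩ ⟨hz, u, by simp, by simp⟩
      exact hxz (Sym2.congr_right.mp this)
  · left
    refine ⟨hP.1, fun f hf => ?_⟩
    by_cases hfP : f ∈ P
    · have hex : ∃ v, v ∈ f := by
        induction f using Sym2.ind with
        | _ u v => exact ⟨u, by simp⟩
      obtain ⟨v0, hv0⟩ := hex
      refine ⟨f, ⟨hfP, v0, hv0, hv0⟩, ?_⟩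
      rintro e ⟨he, v, hve, hvf⟩
      obtain ⟨x, rfl⟩ := hve
      obtain ⟨z, rfl⟩ := hvf
      by_contra hne
      exact h ⟨v, x, z, fun hxz => hne (by rw [hxz]), he, hfP⟩
    · exact hP.2 f hf hfP
end

section
/- Let G be a finite simple graph, k ≥ 0 an integer, S(G) the 3k-subdivision of G, and P a perfect edge dominating set of S(G). Then for every edge e of G, the path S(e) contains at least k edges of P. -/
/-- `H` is the `3k`-subdivision of `G`, witnessed by the map `ι : V → W`
(the images of the original vertices, "extremes") and, for every ordered pair
`(v, w)` of adjacent vertices, the path `p v w 0, p v w 1, …, p v w (3k+1)`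
replacing the edge `vw` (so `p v w 0 = ι v`, `p v w (3k+1) = ι w`, the `3k`
internal vertices are new, pairwise distinct, distinct for distinct edges of `G`,
and the edges of `H` are exactly the consecutive pairs of these paths).
For `k = 0` the subdivision is `G` itself. -/
def IsSubdivision {V W : Type*} (G : SimpleGraph V) (k : ℕ) (H : SimpleGraph W)
    (ι : V → W) (p : V → V → ℕ → W) : Prop :=
  Function.Injective ι ∧
  (∀ v w, G.Adj v w → p v w 0 = ι v ∧ p v w (3 * k + 1) = ι w) ∧
  (∀ v w, G.Adj v w → ∀ i ≤ 3 * k + 1, p v w i = p w v (3 * k + 1 - i)) ∧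
  (∀ v w, G.Adj v w → ∀ i ≤ 3 * k + 1, ∀ j ≤ 3 * k + 1, p v w i = p v w j → i = j) ∧
  (∀ v w, G.Adj v w → ∀ i, 0 < i → i < 3 * k + 1 → p v w i ∉ Set.range ι) ∧
  (∀ v w v' w', G.Adj v w → G.Adj v' w' → ∀ i j, 0 < i → i < 3 * k + 1 →
      0 < j → j < 3 * k + 1 → p v w i = p v' w' j → s(v, w) = s(v', w')) ∧
  (∀ x : W, (∃ v, x = ι v) ∨
      ∃ v w i, G.Adj v w ∧ 0 < i ∧ i < 3 * k + 1 ∧ x = p v w i) ∧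
  (∀ x y : W, H.Adj x y ↔ ∃ v w i, G.Adj v w ∧ i ≤ 3 * k ∧
      ((x = p v w i ∧ y = p v w (i + 1)) ∨ (y = p v w i ∧ x = p v w (i + 1))))

/-- The edge set `S(e)` of the path of the subdivision replacing the edge
`e = vw` of `G`: the edges `e_0, e_1, …, e_{3k}`. -/
def pathEdges {V W : Type*} (p : V → V → ℕ → W) (k : ℕ) (v w : V) :
    Set (Sym2 W) :=
  {e | ∃ i ≤ 3 * k, e = s(p v w i, p v w (i + 1))}

/-- For every edge `e = vw` of `G`, the path `S(e)` of the `3k`-subdivision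
contains at least `k` edges of any perfect edge dominating set `P` of `S(G)`. -/
theorem subdivision_path_lower_bound {V W : Type*} [Fintype V] [Fintype W]
    (G : SimpleGraph V) (k : ℕ) (H : SimpleGraph W) (ι : V → W) (p : V → V → ℕ → W)
    (hsub : IsSubdivision G k H ι p) (P : Set (Sym2 W)) (hP : IsPEDS H P)
    {v w : V} (hvw : G.Adj v w) :
    k ≤ (P ∩ pathEdges p k v w).ncard := by
  obtain ⟨hinj, hend, hrev, hpinj, hint, hdisj, hcov, hadj⟩ := hsub
  obtain ⟨hPsub, hPdom⟩ := hP
  -- a path edge of any pair meeting an interior vertex of the path is one of the two there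
  have key : ∀ e ∈ H.edgeSet, ∀ a, 0 < a → a < 3 * k + 1 → p v w a ∈ e →
      ∃ m, m ≤ 3 * k ∧ (m = a ∨ m + 1 = a) ∧ e = s(p v w m, p v w (m + 1)) := by
    intro e he a ha0 ha1 hae
    have hex : ∃ v' w' m, G.Adj v' w' ∧ m ≤ 3 * k ∧
        e = s(p v' w' m, p v' w' (m + 1)) := by
      induction e using Sym2.ind with
      | _ x y =>
        rw [SimpleGraph.mem_edgeSet, hadj] at he
        obtain ⟨v', w', m, h1, h2, h3 | h3⟩ := he
        · exact ⟨v', w', m, h1, h2, by rw [h3.1, h3.2]⟩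
        · exact ⟨v', w', m, h1, h2, by rw [h3.1, h3.2, Sym2.eq_swap]⟩
    obtain ⟨v', w', m, hv', hm, rfl⟩ := hex
    have hb : ∃ b, (m = b ∨ m + 1 = b) ∧ p v w a = p v' w' b := by
      rw [Sym2.mem_iff] at hae
      rcases hae with h | h
      · exact ⟨m, Or.inl rfl, h⟩
      · exact ⟨m + 1, Or.inr rfl, h⟩
    obtain ⟨b, hmb, hab⟩ := hb
    have hnr := hint v w hvw a ha0 ha1
    have hb0 : 0 < b := by
      rcases Nat.eq_zero_or_pos b with h | h
      · subst h
        exact absurd ⟨v', by rw [hab, (hend v' w' hv').1]⟩ hnr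
      · exact h
    have hb1 : b < 3 * k + 1 := by
      by_contra h
      have h' : b = 3 * k + 1 := by omega
      subst h'
      exact absurd ⟨w', by rw [hab, (hend v' w' hv').2]⟩ hnr
    have hs := hdisj v w v' w' hvw hv' a b ha0 ha1 hb0 hb1 hab
    rw [Sym2.eq_iff] at hs
    rcases hs with ⟨rfl, rfl⟩ | ⟨rfl, rfl⟩
    · have := hpinj v w hvw a (by omega) b (by omega) hab
      exact ⟨m, hm, by omega, rfl⟩
    · rw [hrev w v hv' b (by omega)] at hab
      have := hpinj v w hvw a (by omega) _ (by omega) hab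
      refine ⟨3 * k - m, by omega, by omega, ?_⟩
      rw [hrev w v hv' m (by omega), hrev w v hv' (m + 1) (by omega), Sym2.eq_swap]
      have e1 : 3 * k + 1 - (m + 1) = 3 * k - m := by omega
      have e2 : 3 * k + 1 - m = 3 * k - m + 1 := by omega
      rw [e1, e2]
  have main : ∀ j : Fin k, ∃ m, 3 * j.1 ≤ m ∧ m ≤ 3 * j.1 + 2 ∧
      s(p v w m, p v w (m + 1)) ∈ P := by
    intro j
    have hj := j.2
    by_cases hf : s(p v w (3 * j.1 + 1), p v w (3 * j.1 + 1 + 1)) ∈ P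
    · exact ⟨3 * j.1 + 1, by omega, by omega, hf⟩
    · have hfH : s(p v w (3 * j.1 + 1), p v w (3 * j.1 + 1 + 1)) ∈ H.edgeSet := by
        rw [SimpleGraph.mem_edgeSet, hadj]
        exact ⟨v, w, 3 * j.1 + 1, hvw, by omega, Or.inl ⟨rfl, rfl⟩⟩
      obtain ⟨e, ⟨heP, u, hue, huf⟩, -⟩ := hPdom _ hfH hf
      rw [Sym2.mem_iff] at huf
      rcases huf with rfl | rfl
      · obtain ⟨m, _, h2, rfl⟩ := key e (hPsub heP) _ (by omega) (by omega) hue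
        exact ⟨m, by omega, by omega, heP⟩
      · obtain ⟨m, _, h2, rfl⟩ := key e (hPsub heP) _ (by omega) (by omega) hue
        exact ⟨m, by omega, by omega, heP⟩
  choose g hg1 hg2 hg3 using main
  have hinjF : Function.Injective (fun j : Fin k => s(p v w (g j), p v w (g j + 1))) := by
    intro i j hij
    have hi := i.2
    have hj := j.2
    have a1 := hg1 i
    have a2 := hg2 i
    have b1 := hg1 j
    have b2 := hg2 j
    simp only [Sym2.eq_iff] at hij
    have hgg : g i = g j := by
      rcases hij with ⟨h, -⟩ | ⟨h, h'⟩
      · exact hpinj v w hvw _ (by omega) _ (by omega) h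
      · have := hpinj v w hvw _ (by omega) _ (by omega) h
        have := hpinj v w hvw _ (by omega) _ (by omega) h'
        omega
    exact Fin.ext (by omega)
  have hcard : (Set.range (fun j : Fin k => s(p v w (g j), p v w (g j + 1)))).ncard = k := by
    rw [← Set.image_univ, Set.ncard_image_of_injective _ hinjF, Set.ncard_univ, Nat.card_fin]
  calc k = _ := hcard.symm
    _ ≤ _ := by
      apply Set.ncard_le_ncard _ (Set.toFinite _)
      rintro _ ⟨j, rfl⟩
      have hj := j.2
      have := hg2 j
      exact ⟨hg3 j, g j, by omega, rfl⟩
end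

section
/- Let G be a finite simple graph, k ≥ 0 an integer, S(G) the 3k-subdivision of G, P a perfect edge dominating set of S(G), and (B,Y,W) the 3-coloring of V(S(G)) associated to P. If for an edge e = vw of G the path S(e) contains exactly k edges of P, then the extreme edges e_0 and e_{3k} of S(e) are not in P, exactly one of v, w lies in W, and the other lies in Y. -/
theorem aux_count (c : ℕ → ℕ) (k : ℕ) (hw : ∀ i, i + 2 ≤ 3 * k → 1 ≤ c i + c (i+1) + c (i+2))
    (hs : ∑ i ∈ Finset.range (3 * k + 1), c i = k) :
    (∀ j ≤ k, c (3 * j) = 0) ∧ (∀ j < k, c (3 * j + 1) + c (3 * j + 2) = 1) := by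
  set S : ℕ → ℕ := fun n => ∑ i ∈ Finset.range n, c i with hS
  have hsucc : ∀ n, S (n+1) = S n + c n := fun n => Finset.sum_range_succ c n
  have h1 : ∀ j ≤ k, j ≤ S (3 * j) := by
    intro j
    induction j with
    | zero => intro _; omega
    | succ j ih =>
      intro hj
      have := ih (by omega)
      have := hw (3 * j) (by omega)
      have a := hsucc (3*j)
      have b := hsucc (3*j+1)
      have d := hsucc (3*j+2)
      rw [show 3 * (j+1) = 3*j+2+1 by ring]
      simp only [add_assoc, Nat.reduceAdd] at *
      omega
  have h2 : ∀ j m, j + m ≤ k → S (3 * j + 1) + m ≤ S (3 * (j + m) + 1) := by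
    intro j m
    induction m with
    | zero => intro _; simp
    | succ m ih =>
      intro hj
      have := ih (by omega)
      have := hw (3 * (j+m)+1) (by omega)
      have a := hsucc (3*(j+m)+1)
      have b := hsucc (3*(j+m)+2)
      have d := hsucc (3*(j+m)+3)
      rw [show 3 * (j+(m+1))+1 = 3*(j+m)+4 by ring]
      simp only [add_assoc, Nat.reduceAdd] at *
      omega
  have h3 : ∀ j ≤ k, c (3 * j) = 0 ∧ S (3 * j) = j := by
    intro j hj
    have a := h1 j hj
    have b := h2 j (k - j) (by omega)
    rw [show j + (k - j) = k by omega] at b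
    have d := hsucc (3*j)
    change S (3*k+1) = k at hs
    omega
  refine ⟨fun j hj => (h3 j hj).1, fun j hj => ?_⟩
  have a := h3 j (by omega)
  have b := (h3 (j+1) (by omega)).2
  have d := hsucc (3*j)
  have e := hsucc (3*j+1)
  have f := hsucc (3*j+2)
  rw [show 3 * (j+1) = 3*j+3 by ring] at b
  simp only [add_assoc, Nat.reduceAdd] at *
  omega

theorem aux_edge {W : Type*} (H : SimpleGraph W) (P : Set (Sym2 W)) (hP : IsPEDS H P)
    {a b : W} (hab : H.Adj a b) (hn : s(a, b) ∉ P) :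
    (Whitev P a ∧ Yellowv P b) ∨ (Yellowv P a ∧ Whitev P b) := by
  obtain ⟨e, ⟨heP, x, hxe, hx⟩, hu⟩ := hP.2 s(a, b) hab hn
  have hboth : ¬ (a ∈ e ∧ b ∈ e) := by
    intro h
    apply hn
    rw [← (Sym2.mem_and_mem_iff hab.ne).1 h]
    exact heP
  have ha : ∀ f ∈ P, a ∈ f → f = e := fun f hf haf => hu f ⟨hf, a, haf, by simp⟩
  have hb : ∀ f ∈ P, b ∈ f → f = e := fun f hf haf => hu f ⟨hf, b, haf, by simp⟩
  rcases Sym2.mem_iff.1 hx with rfl | rfl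
  · right
    refine ⟨⟨e, ⟨heP, hxe⟩, fun f hf => ha f hf.1 hf.2⟩, fun f hf hbf => hboth ⟨hxe, ?_⟩⟩
    rw [← hb f hf hbf]; exact hbf
  · left
    refine ⟨fun f hf hbf => hboth ⟨?_, hxe⟩, ⟨e, ⟨heP, hxe⟩, fun f hf => hb f hf.1 hf.2⟩⟩
    rw [← ha f hf hbf]; exact hbf

theorem aux_pos {V W : Type*} (G : SimpleGraph V) (k : ℕ) (H : SimpleGraph W) (ι : V → W)
    (p : V → V → ℕ → W) (hsub : IsSubdivision G k H ι p) {v w v' w' : V} (hvw : G.Adj v w)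
    (hvw' : G.Adj v' w') (i j : ℕ) (hi : 0 < i) (hi' : i < 3 * k + 1) (hj : j ≤ 3 * k + 1)
    (h : p v w i = p v' w' j) :
    (v' = v ∧ w' = w ∧ j = i) ∨ (v' = w ∧ w' = v ∧ j = 3 * k + 1 - i) := by
  obtain ⟨hι, hend, hsymm, hinj, hint, hdis, -, -⟩ := hsub
  have hr := hint v w hvw i hi hi'
  have h0 : j ≠ 0 := by
    rintro rfl
    exact hr ⟨v', by rw [h, (hend v' w' hvw').1]⟩
  have h1 : j ≠ 3 * k + 1 := by
    rintro rfl
    exact hr ⟨w', by rw [h, (hend v' w' hvw').2]⟩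
  have hs := hdis v w v' w' hvw hvw' i j hi hi' (by omega) (by omega) h
  rcases Sym2.eq_iff.1 hs with ⟨rfl, rfl⟩ | ⟨rfl, rfl⟩
  · left
    exact ⟨rfl, rfl, (hinj _ _ hvw i hi'.le j hj h).symm⟩
  · right
    rw [hsymm _ _ hvw' j hj] at h
    have := hinj _ _ hvw i hi'.le _ (by omega) h
    exact ⟨rfl, rfl, by omega⟩

theorem aux_inc {V W : Type*} (G : SimpleGraph V) (k : ℕ) (H : SimpleGraph W) (ι : V → W)
    (p : V → V → ℕ → W) (hsub : IsSubdivision G k H ι p) {v w : V} (hvw : G.Adj v w)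
    (i : ℕ) (hi' : i < 3 * k) (f : Sym2 W) (hf : f ∈ H.edgeSet)
    (hm : p v w (i + 1) ∈ f) :
    f = s(p v w i, p v w (i + 1)) ∨ f = s(p v w (i + 1), p v w (i + 2)) := by
  have hsymm := hsub.2.2.1
  have hadj := hsub.2.2.2.2.2.2.2
  have key : ∃ v' w' j, G.Adj v' w' ∧ j ≤ 3 * k ∧ f = s(p v' w' j, p v' w' (j + 1)) := by
    induction f with
    | _ x y =>
      obtain ⟨v', w', j, h1, h2, h3⟩ := (hadj x y).1 hf
      refine ⟨v', w', j, h1, h2, ?_⟩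
      rcases h3 with ⟨rfl, rfl⟩ | ⟨rfl, rfl⟩
      · rfl
      · exact Sym2.eq_swap
  obtain ⟨v', w', j, h1, h2, rfl⟩ := key
  rcases Sym2.mem_iff.1 hm with h | h
  · rcases aux_pos G k H ι p hsub hvw h1 _ _ (by omega) (by omega) (by omega) h with
      ⟨rfl, rfl, rfl⟩ | ⟨rfl, rfl, rfl⟩
    · right; rfl
    · left
      rw [hsymm _ _ h1 _ (by omega), hsymm _ _ h1 (3 * k + 1 - (i+1) + 1) (by omega), Sym2.eq_swap]
      congr 3 <;> omega
  · rcases aux_pos G k H ι p hsub hvw h1 _ _ (by omega) (by omega) (by omega) h with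
      ⟨rfl, rfl, h⟩ | ⟨rfl, rfl, h⟩
    · left
      rw [show j = i by omega]
    · right
      rw [hsymm _ _ h1 _ (by omega), hsymm _ _ h1 (j + 1) (by omega), Sym2.eq_swap]
      congr 3 <;> omega

theorem subdivision_path_exact {V W : Type*} [Fintype V] [Fintype W]
    (G : SimpleGraph V) (k : ℕ) (H : SimpleGraph W) (ι : V → W) (p : V → V → ℕ → W)
    (hsub : IsSubdivision G k H ι p) (P : Set (Sym2 W)) (hP : IsPEDS H P)
    {v w : V} (hvw : G.Adj v w)
    (hexact : (P ∩ pathEdges p k v w).ncard = k) :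
    s(p v w 0, p v w 1) ∉ P ∧ s(p v w (3 * k), p v w (3 * k + 1)) ∉ P ∧
    ((Whitev P (ι v) ∧ Yellowv P (ι w)) ∨ (Yellowv P (ι v) ∧ Whitev P (ι w))) := by
  classical
  have hend := hsub.2.1 v w hvw
  have hinj := hsub.2.2.2.1 v w hvw
  have hadj : ∀ i ≤ 3 * k, H.Adj (p v w i) (p v w (i + 1)) := fun i hi =>
    (hsub.2.2.2.2.2.2.2 _ _).2 ⟨v, w, i, hvw, hi, Or.inl ⟨rfl, rfl⟩⟩
  have hinc := aux_inc G k H ι p hsub hvw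
  set e : ℕ → Sym2 W := fun i => s(p v w i, p v w (i + 1)) with he
  have einj : ∀ i ≤ 3 * k, ∀ j ≤ 3 * k, e i = e j → i = j := by
    intro i hi j hj h
    rcases Sym2.eq_iff.1 h with ⟨h1, -⟩ | ⟨h1, h2⟩
    · exact hinj i (by omega) j (by omega) h1
    · have := hinj i (by omega) _ (by omega) h1
      have := hinj _ (by omega) _ (by omega) h2
      omega
  -- internal vertices
  have hW : ∀ i < 3 * k, Whitev P (p v w (i + 1)) ↔ e i ∉ P ∧ e (i + 1) ∉ P := by
    intro i hi
    constructor
    · intro h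
      exact ⟨fun h' => h _ h' (by simp [he]), fun h' => h _ h' (by simp [he])⟩
    · rintro ⟨h1, h2⟩ f hf hm
      rcases hinc i hi f (hP.1 hf) hm with rfl | rfl
      · exact h1 hf
      · exact h2 hf
  have hY : ∀ i < 3 * k, Yellowv P (p v w (i + 1)) ↔
      (e i ∈ P ∧ e (i + 1) ∉ P) ∨ (e i ∉ P ∧ e (i + 1) ∈ P) := by
    intro i hi
    have hne : e i ≠ e (i + 1) := fun h => by
      have := einj i (by omega) (i+1) (by omega) h
      omega
    have m1 : p v w (i + 1) ∈ e i := by simp [he]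
    have m2 : p v w (i + 1) ∈ e (i + 1) := by simp [he]
    constructor
    · rintro ⟨f, ⟨hf, hm⟩, hu⟩
      have : f = e i ∨ f = e (i + 1) := hinc i hi f (hP.1 hf) hm
      rcases this with rfl | rfl
      · exact Or.inl ⟨hf, fun h => hne (hu _ ⟨h, m2⟩).symm⟩
      · exact Or.inr ⟨fun h => hne (hu _ ⟨h, m1⟩), hf⟩
    · rintro (⟨h1, h2⟩ | ⟨h1, h2⟩)
      · refine ⟨e i, ⟨h1, m1⟩, ?_⟩
        rintro f ⟨hf, hm⟩
        rcases hinc i hi f (hP.1 hf) hm with rfl | rfl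
        · rfl
        · exact absurd hf h2
      · refine ⟨e (i+1), ⟨h2, m2⟩, ?_⟩
        rintro f ⟨hf, hm⟩
        rcases hinc i hi f (hP.1 hf) hm with rfl | rfl
        · exact absurd hf h1
        · rfl
  have hE : ∀ i ≤ 3 * k, e i ∉ P → (Whitev P (p v w i) ∧ Yellowv P (p v w (i+1))) ∨
      (Yellowv P (p v w i) ∧ Whitev P (p v w (i+1))) := fun i hi hn =>
    aux_edge H P hP (hadj i hi) hn
  set c : ℕ → ℕ := fun i => if e i ∈ P then 1 else 0 with hc
  have hwin : ∀ i, i + 2 ≤ 3 * k → 1 ≤ c i + c (i+1) + c (i+2) := by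
    intro i hi
    by_contra hlt
    have h0 : e i ∉ P := fun h => hlt (by simp [hc, h]; omega)
    have h1 : e (i+1) ∉ P := fun h => hlt (by simp [hc, h]; omega)
    have h2 : e (i+2) ∉ P := fun h => hlt (by simp [hc, h])
    have a := hE (i+1) (by omega) h1
    have b := hY i (by omega)
    have d := hY (i+1) (by omega)
    simp only [add_assoc, Nat.reduceAdd] at a b d
    tauto
  have hsum : ∑ i ∈ Finset.range (3 * k + 1), c i = k := by
    rw [← Finset.card_filter]
    refine Eq.trans ?_ hexact
    have hset : P ∩ pathEdges p k v w =
        (((Finset.range (3 * k + 1)).filter (fun i => e i ∈ P)).image e : Finset (Sym2 W)) := by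
      ext f
      simp only [pathEdges, Set.mem_inter_iff, Set.mem_ofPred_eq, Finset.coe_image, Set.mem_image,
        Finset.coe_filter, Finset.mem_range]
      constructor
      · rintro ⟨hf, i, hi, rfl⟩
        exact ⟨i, ⟨by omega, hf⟩, rfl⟩
      · rintro ⟨i, ⟨hi, hf⟩, rfl⟩
        exact ⟨hf, i, by omega, rfl⟩
    rw [hset, Set.ncard_coe_finset, Finset.card_image_of_injOn]
    intro i hi j hj h
    simp only [Finset.coe_filter, Finset.mem_range, Set.mem_ofPred_eq] at hi hj
    exact einj i (by omega) j (by omega) h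
  obtain ⟨hz, hone⟩ := aux_count c k hwin hsum
  have hz' : ∀ j ≤ k, e (3 * j) ∉ P := fun j hj h => by
    have := hz j hj
    simp [hc, h] at this
  have hone' : ∀ j < k, (e (3 * j + 1) ∈ P ↔ e (3 * j + 2) ∉ P) := fun j hj => by
    have := hone j hj
    by_cases h1 : e (3 * j + 1) ∈ P <;> by_cases h2 : e (3 * j + 2) ∈ P <;> simp [hc, h1, h2] at this ⊢
  have step : ∀ j ≤ k, (Whitev P (p v w 0) → Whitev P (p v w (3 * j))) ∧
      (Yellowv P (p v w 0) → Yellowv P (p v w (3 * j))) := by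
    intro j
    induction j with
    | zero => intro _; exact ⟨id, id⟩
    | succ j ih =>
      intro hj
      have ih := ih (by omega)
      have z0 := hz' j (by omega)
      have z1 := hz' (j+1) hj
      have o := hone' j (by omega)
      have E := hE (3*j) (by omega) z0
      have y1 := hY (3*j) (by omega)
      have w1 := hW (3*j) (by omega)
      have y3 := hY (3*j+2) (by omega)
      have w3 := hW (3*j+2) (by omega)
      have nb : Whitev P (p v w (3*j)) → Yellowv P (p v w (3*j)) → False := by
        rintro h ⟨f, hf, -⟩
        exact h f hf.1 hf.2
      change e (3*j+3) ∉ P at z1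
      change Yellowv P (p v w (3*j+3)) ↔ (e (3*j+2) ∈ P ∧ e (3*j+3) ∉ P) ∨
        (e (3*j+2) ∉ P ∧ e (3*j+3) ∈ P) at y3
      change Whitev P (p v w (3*j+3)) ↔ e (3*j+2) ∉ P ∧ e (3*j+3) ∉ P at w3
      change (Whitev P (p v w 0) → Whitev P (p v w (3*j+3))) ∧
        (Yellowv P (p v w 0) → Yellowv P (p v w (3*j+3)))
      constructor
      · intro h
        have h0 := ih.1 h
        rcases E with E | E
        · have h1 : e (3*j+1) ∈ P := by
            rcases y1.1 E.2 with q | q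
            · exact absurd q.1 z0
            · exact q.2
          exact w3.2 ⟨o.1 h1, z1⟩
        · exact (nb h0 E.1).elim
      · intro h
        have h0 := ih.2 h
        rcases E with E | E
        · exact (nb E.1 h0).elim
        · have h1 := (w1.1 E.2).2
          have h2 : e (3*j+2) ∈ P := by
            by_contra q
            exact h1 (o.2 q)
          exact y3.2 (Or.inl ⟨h2, z1⟩)
  refine ⟨hz' 0 (by omega), hz' k le_rfl, ?_⟩
  have s := step k le_rfl
  have E0 := hE 0 (by omega) (hz' 0 (by omega))
  have E := hE (3*k) le_rfl (hz' k le_rfl)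
  have nb : ∀ x, Whitev P x → Yellowv P x → False := by
    rintro x h ⟨f, hf, -⟩
    exact h f hf.1 hf.2
  have nb := nb (p v w (3*k))
  rw [← hend.1, ← hend.2]
  rcases E0 with E0 | E0
  · rcases E with E | E
    · exact Or.inl ⟨E0.1, E.2⟩
    · exact (nb (s.1 E0.1) E.1).elim
  · rcases E with E | E
    · exact (nb E.1 (s.2 E0.1)).elim
    · exact Or.inr ⟨E0.1, E.2⟩
end

section
/- Let r ≥ 1, let G be an r-regular finite simple graph, k ≥ 0 an integer, S(G) the 3k-subdivision of G, and P a perfect edge dominating set of S(G). Then for every edge e of G, the set S(N'[e]) contains at least 2rk - k + 1 edges of P. -/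
/-- `S(N'[e])` for an edge `e = vw` of `G`: the union of the edge sets of the
paths `S(e')` over all edges `e'` of `G` sharing an endpoint with `e`
(including `e` itself). -/
def nbrPathEdges {V W : Type*} (G : SimpleGraph V) (p : V → V → ℕ → W) (k : ℕ)
    (v w : V) : Set (Sym2 W) :=
  {e | ∃ a b, G.Adj a b ∧ (a = v ∨ a = w ∨ b = v ∨ b = w) ∧ e ∈ pathEdges p k a b}

theorem seq_aux (f : ℕ → Prop) [DecidablePred f] (k : ℕ)
    (hw : ∀ i, i + 2 ≤ 3 * k → f i ∨ f (i + 1) ∨ f (i + 2)) :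
    k ≤ Nat.count f (3 * k + 1) ∧ (Nat.count f (3 * k + 1) ≤ k →
      (∀ j ≤ k, ¬ f (3 * j)) ∧ (1 ≤ k → f 1 → f (3 * k - 1) → False)) := by
  have step : ∀ i, i + 2 ≤ 3 * k → Nat.count f i + 1 ≤ Nat.count f (i + 3) := by
    intro i hi
    have := hw i hi
    rw [show i + 3 = i + 1 + 1 + 1 from rfl, Nat.count_succ, Nat.count_succ, Nat.count_succ]
    rcases this with h | h | h
    · rw [if_pos h]; omega
    · rw [if_pos h]; omega
    · rw [if_pos (show f (i + 1 + 1) from h)]; omega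
  have steps : ∀ m i, i + 3 * m ≤ 3 * k + 1 → Nat.count f i + m ≤ Nat.count f (i + 3 * m) := by
    intro m
    induction m with
    | zero => intro i _; simp
    | succ m ih =>
      intro i hi
      have h1 := ih i (by omega)
      have h2 := step (i + 3 * m) (by omega)
      rw [show i + 3 * (m + 1) = i + 3 * m + 3 by ring]
      omega
  have mono : ∀ j ≤ k, Nat.count f (3 * j + 1) + (k - j) ≤ Nat.count f (3 * k + 1) := by
    intro j hj
    have := steps (k - j) (3 * j + 1) (by omega)
    rwa [show 3 * j + 1 + 3 * (k - j) = 3 * k + 1 by omega] at this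
  have low : ∀ j ≤ k, j ≤ Nat.count f (3 * j) := by
    intro j hj
    have := steps j 0 (by omega)
    simpa using this
  refine ⟨?_, fun hle => ?_⟩
  · have := mono 0 (by omega)
    omega
  have h3 : ∀ j ≤ k, ¬ f (3 * j) := by
    intro j hj hf
    have h1 := mono j hj
    have h2 := low j hj
    rw [Nat.count_succ, if_pos hf] at h1
    omega
  refine ⟨h3, fun hk h1 hlast => ?_⟩
  have ex : ∀ j, j + 1 ≤ k → f (3 * j + 1) → ¬ f (3 * j + 2) := by
    intro j hj ha hb
    have h1 := mono (j + 1) hj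
    have h2 := low j (by omega)
    rw [show 3 * (j + 1) + 1 = 3 * j + 1 + 1 + 1 + 1 by ring, Nat.count_succ, Nat.count_succ,
      Nat.count_succ, Nat.count_succ, if_pos ha, if_pos (show f (3 * j + 1 + 1) from hb)] at h1
    omega
  have all : ∀ j, j + 1 ≤ k → f (3 * j + 1) := by
    intro j
    induction j with
    | zero => intro _; simpa using h1
    | succ j ih =>
      intro hj
      have a := ih (by omega)
      have b := ex j (by omega) a
      have c := h3 (j + 1) (by omega)
      rcases hw (3 * j + 2) (by omega) with h | h | h
      · exact absurd h b
      · exact absurd h c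
      · exact h
  obtain ⟨m, rfl⟩ : ∃ m, k = m + 1 := ⟨k - 1, by omega⟩
  exact ex m le_rfl (all m le_rfl) hlast

section
variable {V W : Type*} {G : SimpleGraph V} {k : ℕ} {H : SimpleGraph W} {ι : V → W}
  {p : V → V → ℕ → W}

/-- The i-th edge of the path. -/
def pe (p : V → V → ℕ → W) (a b : V) (i : ℕ) : Sym2 W := s(p a b i, p a b (i + 1))

theorem pe_rev (hsub : IsSubdivision G k H ι p) {a b : V} (h : G.Adj a b) {i : ℕ}
    (hi : i ≤ 3 * k) : pe p a b i = pe p b a (3 * k - i) := by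
  obtain ⟨-, -, h3, -⟩ := hsub
  unfold pe
  rw [h3 a b h i (by omega), h3 a b h (i + 1) (by omega), Sym2.eq_swap,
    show 3 * k + 1 - (i + 1) = 3 * k - i by omega, show 3 * k + 1 - i = 3 * k - i + 1 by omega]

theorem pe_mem (hsub : IsSubdivision G k H ι p) {a b : V} (h : G.Adj a b) {i : ℕ}
    (hi : i ≤ 3 * k) : pe p a b i ∈ H.edgeSet := by
  obtain ⟨-, -, -, -, -, -, -, h8⟩ := hsub
  exact (h8 _ _).2 ⟨a, b, i, h, hi, Or.inl ⟨rfl, rfl⟩⟩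

theorem mem_pe (hsub : IsSubdivision G k H ι p) {e : Sym2 W} (he : e ∈ H.edgeSet) :
    ∃ a b i, G.Adj a b ∧ i ≤ 3 * k ∧ e = pe p a b i := by
  obtain ⟨-, -, -, -, -, -, -, h8⟩ := hsub
  induction e using Sym2.ind with
  | _ x y =>
    obtain ⟨a, b, i, h, hi, ⟨rfl, rfl⟩ | ⟨rfl, rfl⟩⟩ := (h8 x y).1 he
    · exact ⟨a, b, i, h, hi, rfl⟩
    · exact ⟨a, b, i, h, hi, Sym2.eq_swap⟩

theorem int_eq (hsub : IsSubdivision G k H ι p) {a b c d : V} (h : G.Adj a b) (h' : G.Adj c d)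
    {i j : ℕ} (hi0 : 0 < i) (hi : i < 3 * k + 1) (hj : j ≤ 3 * k + 1)
    (e : p a b i = p c d j) : s(a, b) = s(c, d) ∧ 0 < j ∧ j < 3 * k + 1 := by
  obtain ⟨h1, h2, h3, h4, h5, h6, h7, h8⟩ := hsub
  have n := h5 a b h i hi0 hi
  have j0 : j ≠ 0 := by
    rintro rfl
    exact n ⟨c, by rw [e, (h2 c d h').1]⟩
  have j1 : j ≠ 3 * k + 1 := by
    rintro rfl
    exact n ⟨d, by rw [e, (h2 c d h').2]⟩
  exact ⟨h6 a b c d h h' i j hi0 hi (by omega) (by omega) e, by omega, by omega⟩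

theorem int_edge (hsub : IsSubdivision G k H ι p) {a b : V} (h : G.Adj a b)
    {i : ℕ} (hi : i + 1 < 3 * k + 1) {e : Sym2 W} (he : e ∈ H.edgeSet)
    (hm : p a b (i + 1) ∈ e) : e = pe p a b i ∨ e = pe p a b (i + 1) := by
  obtain ⟨c, d, j, h', hj, rfl⟩ := mem_pe hsub he
  have key : s(a, b) = s(c, d) := by
    rcases Sym2.mem_iff.1 hm with q | q
    · exact (int_eq hsub h h' (by omega) hi (by omega) q).1
    · exact (int_eq hsub h h' (by omega) hi (by omega) q).1
  have main : ∀ j ≤ 3 * k, p a b (i + 1) ∈ pe p a b j →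
      pe p a b j = pe p a b i ∨ pe p a b j = pe p a b (i + 1) := by
    intro j hj hm
    obtain ⟨h1, h2, h3, h4, -⟩ := hsub
    rcases Sym2.mem_iff.1 hm with q | q
    · have := h4 a b h _ (by omega) _ (by omega) q
      right; rw [this]
    · have := h4 a b h _ (by omega) _ (by omega) q
      left
      have : j = i := by omega
      rw [this]
  rcases Sym2.eq_iff.1 key with ⟨rfl, rfl⟩ | ⟨rfl, rfl⟩
  · exact main j hj hm
  · rw [pe_rev hsub h' hj] at hm ⊢
    exact main _ (by omega) hm

theorem ext_edge (hsub : IsSubdivision G k H ι p) {a : V} {e : Sym2 W} (he : e ∈ H.edgeSet)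
    (hm : ι a ∈ e) : ∃ b, G.Adj a b ∧ e = pe p a b 0 := by
  obtain ⟨c, d, j, h', hj, rfl⟩ := mem_pe hsub he
  have hs := hsub
  obtain ⟨h1, h2, h3, h4, h5, -⟩ := hs
  rcases Sym2.mem_iff.1 hm with q | q
  · have j0 : j = 0 := by
      by_contra hne
      exact h5 c d h' j (by omega) (by omega) ⟨a, q⟩
    subst j0
    rw [(h2 c d h').1] at q
    obtain rfl := h1 q
    exact ⟨d, h', rfl⟩
  · have j0 : j = 3 * k := by
      by_contra hne
      exact h5 c d h' (j + 1) (by omega) (by omega) ⟨a, q⟩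
    subst j0
    rw [(h2 c d h').2] at q
    obtain rfl := h1 q
    refine ⟨c, h'.symm, ?_⟩
    rw [pe_rev hsub h' le_rfl, Nat.sub_self]

theorem pe_inj (hsub : IsSubdivision G k H ι p) {a b c d : V} (h : G.Adj a b) (h' : G.Adj c d)
    {i j : ℕ} (hi : i ≤ 3 * k) (hj : j ≤ 3 * k)
    (e : pe p a b i = pe p c d j) : s(a, b) = s(c, d) := by
  have m0 : p a b i ∈ pe p c d j := by rw [← e]; exact Sym2.mem_mk_left _ _
  have m1 : p a b (i + 1) ∈ pe p c d j := by rw [← e]; exact Sym2.mem_mk_right _ _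
  by_cases hk : k = 0
  · subst hk
    obtain ⟨h1, h2, -⟩ := hsub
    obtain rfl : i = 0 := by omega
    obtain rfl : j = 0 := by omega
    unfold pe at e
    have x := h2 a b h
    have y := h2 c d h'
    simp only [Nat.mul_zero] at x y
    rw [x.1, x.2, y.1, y.2] at e
    rcases Sym2.eq_iff.1 e with ⟨q1, q2⟩ | ⟨q1, q2⟩
    · rw [h1 q1, h1 q2]
    · rw [h1 q1, h1 q2, Sym2.eq_swap]
  · by_cases hi0 : i = 0
    · rcases Sym2.mem_iff.1 m1 with q | q
      · exact (int_eq hsub h h' (by omega) (by omega) (by omega) q).1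
      · exact (int_eq hsub h h' (by omega) (by omega) (by omega) q).1
    · rcases Sym2.mem_iff.1 m0 with q | q
      · exact (int_eq hsub h h' (by omega) (by omega) (by omega) q).1
      · exact (int_eq hsub h h' (by omega) (by omega) (by omega) q).1

theorem pe_inj' (hsub : IsSubdivision G k H ι p) {a b : V} (h : G.Adj a b)
    {i j : ℕ} (hi : i ≤ 3 * k) (hj : j ≤ 3 * k)
    (e : pe p a b i = pe p a b j) : i = j := by
  obtain ⟨h1, h2, h3, h4, -⟩ := hsub
  rcases Sym2.eq_iff.1 e with ⟨q1, q2⟩ | ⟨q1, q2⟩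
  · exact h4 a b h _ (by omega) _ (by omega) q1
  · have := h4 a b h _ (by omega) _ (by omega) q1
    have := h4 a b h _ (by omega) _ (by omega) q2
    omega

theorem dom {P : Set (Sym2 W)} (hsub : IsSubdivision G k H ι p) (hP : IsPEDS H P)
    {a b : V} (h : G.Adj a b) {i : ℕ} (hi : i ≤ 3 * k) (hn : pe p a b i ∉ P) :
    ∃ e ∈ P, e ∈ H.edgeSet ∧ (p a b i ∈ e ∨ p a b (i + 1) ∈ e) := by
  obtain ⟨e, ⟨heP, x, hxe, hx⟩, -⟩ := hP.2 _ (pe_mem hsub h hi) hn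
  refine ⟨e, heP, hP.1 heP, ?_⟩
  rcases Sym2.mem_iff.1 hx with rfl | rfl
  · exact Or.inl hxe
  · exact Or.inr hxe

theorem window {P : Set (Sym2 W)} (hsub : IsSubdivision G k H ι p) (hP : IsPEDS H P)
    {a b : V} (h : G.Adj a b) (i : ℕ) (hi : i + 2 ≤ 3 * k) :
    pe p a b i ∈ P ∨ pe p a b (i + 1) ∈ P ∨ pe p a b (i + 2) ∈ P := by
  by_cases hn : pe p a b (i + 1) ∈ P
  · exact Or.inr (Or.inl hn)
  obtain ⟨e, heP, heH, hm | hm⟩ := dom hsub hP h (by omega) hn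
  · rcases int_edge hsub h (by omega) heH hm with rfl | rfl
    · exact Or.inl heP
    · exact Or.inr (Or.inl heP)
  · rcases int_edge hsub h (by omega) heH hm with rfl | rfl
    · exact Or.inr (Or.inl heP)
    · exact Or.inr (Or.inr heP)

theorem main_contra {P : Set (Sym2 W)} (hsub : IsSubdivision G k H ι p) (hP : IsPEDS H P)
    {v w : V} (h : G.Adj v w) [DecidablePred fun i => pe p v w i ∈ P]
    (hv : ∀ b, G.Adj v b → pe p v b 0 ∉ P)
    (hw : ∀ b, G.Adj w b → pe p w b 0 ∉ P)
    (hc : Nat.count (fun i => pe p v w i ∈ P) (3 * k + 1) ≤ k) : False := by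
  have S := (seq_aux (fun i => pe p v w i ∈ P) k (window hsub hP h)).2 hc
  have e0 := S.1 0 (by omega)
  have ek := S.1 k le_rfl
  have h2 := hsub.2.1 v w h
  simp only [Nat.mul_zero] at e0
  have nv : ∀ e ∈ P, e ∈ H.edgeSet → ι v ∈ e → False := by
    intro e he heH hm
    obtain ⟨b, hb, rfl⟩ := ext_edge hsub heH hm
    exact hv b hb he
  have nw : ∀ e ∈ P, e ∈ H.edgeSet → ι w ∈ e → False := by
    intro e he heH hm
    obtain ⟨b, hb, rfl⟩ := ext_edge hsub heH hm
    exact hw b hb he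
  have hk : 1 ≤ k := by
    by_contra hk
    obtain rfl : k = 0 := by omega
    obtain ⟨e, heP, heH, hm | hm⟩ := dom hsub hP h (by omega) e0
    · rw [h2.1] at hm; exact nv e heP heH hm
    · rw [show 0 + 1 = 3 * 0 + 1 by rfl, h2.2] at hm; exact nw e heP heH hm
  apply S.2 hk
  · obtain ⟨e, heP, heH, hm | hm⟩ := dom hsub hP h (by omega) e0
    · rw [h2.1] at hm; exact (nv e heP heH hm).elim
    · rcases int_edge hsub h (by omega) heH hm with rfl | rfl
      · exact absurd heP e0
      · exact heP
  · obtain ⟨e, heP, heH, hm | hm⟩ := dom hsub hP h (by omega) ek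
    · rw [show 3 * k = (3 * k - 1) + 1 by omega] at hm
      rcases int_edge hsub h (by omega) heH hm with rfl | rfl
      · exact heP
      · rw [show (3 * k - 1) + 1 = 3 * k by omega] at heP
        exact absurd heP ek
    · rw [h2.2] at hm; exact (nw e heP heH hm).elim

end

/-- For every edge `e` of an `r`-regular graph `G` (`r ≥ 1`), the set `S(N'[e])`
contains at least `2rk - k + 1` edges of any perfect edge dominating set of the
`3k`-subdivision `S(G)`. -/
theorem subdivision_nbr_lower_bound {V W : Type*} [Fintype V] [Fintype W]
    (r : ℕ) (hr : 1 ≤ r) (G : SimpleGraph V) (hreg : IsRegular' G r) (k : ℕ)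
    (H : SimpleGraph W) (ι : V → W) (p : V → V → ℕ → W)
    (hsub : IsSubdivision G k H ι p) (P : Set (Sym2 W)) (hP : IsPEDS H P)
    {v w : V} (hvw : G.Adj v w) :
    2 * r * k - k + 1 ≤ (P ∩ nbrPathEdges G p k v w).ncard := by
  classical
  let A : Finset V := (G.neighborSet v).toFinset
  let B : Finset V := (G.neighborSet w).toFinset.erase v
  let I : Finset (V × V) := A.image (fun b => (v, b)) ∪ B.image (fun b => (w, b))
  have hne : v ≠ w := hvw.ne
  have hA : A.card = r := by
    rw [← hreg v, Set.ncard_eq_toFinset_card']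
  have hB : B.card = r - 1 := by
    rw [Finset.card_erase_of_mem (by simpa using hvw.symm), ← hreg w, Set.ncard_eq_toFinset_card']
  have hI : I.card = 2 * r - 1 := by
    rw [Finset.card_union_of_disjoint, Finset.card_image_of_injective, 
      Finset.card_image_of_injective, hA, hB]
    · omega
    · intro x y hxy; simpa using hxy
    · intro x y hxy; simpa using hxy
    · rw [Finset.disjoint_left]
      simp only [Finset.mem_image]
      rintro _ ⟨x, -, rfl⟩ ⟨y, -, hy⟩
      exact hne (Prod.ext_iff.1 hy).1.symm
  have memI : ∀ q : V × V, q ∈ I ↔ (q.1 = v ∧ G.Adj v q.2) ∨ (q.1 = w ∧ G.Adj w q.2 ∧ q.2 ≠ v) := by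
    rintro ⟨a, b⟩
    simp only [I, A, B, Finset.mem_union, Finset.mem_image, Set.mem_toFinset, Finset.mem_erase,
      SimpleGraph.mem_neighborSet, Prod.mk.injEq]
    constructor
    · rintro (⟨x, h, rfl, rfl⟩ | ⟨x, ⟨h, h'⟩, rfl, rfl⟩)
      · exact Or.inl ⟨rfl, h⟩
      · exact Or.inr ⟨rfl, h', h⟩
    · rintro (⟨rfl, h⟩ | ⟨rfl, h, h'⟩)
      · exact Or.inl ⟨b, h, rfl, rfl⟩
      · exact Or.inr ⟨b, ⟨h', h⟩, rfl, rfl⟩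
  have adjI : ∀ q ∈ I, G.Adj q.1 q.2 := by
    intro q hq
    rcases (memI q).1 hq with ⟨h1, h2⟩ | ⟨h1, h2, -⟩ <;> rw [h1] <;> exact h2
  let F : V × V → Finset ℕ := fun q => (Finset.range (3 * k + 1)).filter (fun i => pe p q.1 q.2 i ∈ P)
  have hF : ∀ q, (F q).card = Nat.count (fun i => pe p q.1 q.2 i ∈ P) (3 * k + 1) := by
    intro q; rw [Nat.count_eq_card_filter_range]
  have hlow : ∀ q ∈ I, k ≤ (F q).card := by
    intro q hq
    rw [hF]
    exact (seq_aux _ k (window hsub hP (adjI q hq))).1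
  have hsum : ∑ q ∈ I, (F q).card ≤ (P ∩ nbrPathEdges G p k v w).ncard := by
    rw [← Finset.card_sigma, ← Set.ncard_coe_finset]
    apply Set.ncard_le_ncard_of_injOn (fun x : (_ : V × V) × ℕ => pe p x.1.1 x.1.2 x.2)
    · rintro ⟨q, i⟩ hx
      simp only [F, Finset.coe_sigma, Set.mem_sigma_iff, Finset.mem_coe, Finset.mem_filter,
        Finset.mem_range] at hx
      obtain ⟨hq, hi, hPi⟩ := hx
      refine ⟨hPi, q.1, q.2, adjI q hq, ?_, i, by omega, rfl⟩
      rcases (memI q).1 hq with h | h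
      · exact Or.inl h.1
      · exact Or.inr (Or.inl h.1)
    · rintro ⟨⟨a, b⟩, i⟩ hx ⟨⟨c, d⟩, j⟩ hy hxy
      simp only [F, Finset.coe_sigma, Set.mem_sigma_iff, Finset.mem_coe, Finset.mem_filter,
        Finset.mem_range] at hx hy
      simp only at hxy
      obtain ⟨hq, hi, -⟩ := hx
      obtain ⟨hq', hj, -⟩ := hy
      have h1 := adjI _ hq
      have h2 := adjI _ hq'
      have h3 := pe_inj hsub h1 h2 (by omega) (by omega) hxy
      rcases Sym2.eq_iff.1 h3 with ⟨rfl, rfl⟩ | ⟨rfl, rfl⟩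
      · have := pe_inj' hsub h1 (by omega) (by omega) hxy
        rw [this]
      · exfalso
        have u1 := (memI _).1 hq
        have u2 := (memI _).1 hq'
        simp only at u1 u2 h1
        have := h1.ne
        grind
  by_contra hlt
  have hmul : 2 * r * k - k = (2 * r - 1) * k := by rw [Nat.sub_mul, one_mul]
  have hle : ∑ q ∈ I, (F q).card ≤ ∑ q ∈ I, k := by
    rw [Finset.sum_const, hI, smul_eq_mul]
    omega
  have heq : ∀ q ∈ I, (F q).card ≤ k := by
    intro q hq
    have := (Finset.sum_eq_sum_iff_of_le hlow).1 (le_antisymm (Finset.sum_le_sum hlow) hle) q hq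
    omega
  have hends : ∀ q ∈ I, ∀ j ≤ k, pe p q.1 q.2 (3 * j) ∉ P := by
    intro q hq
    have h := heq q hq
    rw [hF] at h
    exact ((seq_aux _ k (window hsub hP (adjI q hq))).2 h).1
  have hvwI : (v, w) ∈ I := (memI _).2 (Or.inl ⟨rfl, hvw⟩)
  refine main_contra hsub hP hvw ?_ ?_ (by rw [← hF (v, w)]; exact heq _ hvwI)
  · intro b hb
    exact hends (v, b) ((memI _).2 (Or.inl ⟨rfl, hb⟩)) 0 (by omega)
  · intro b hb
    by_cases hbv : b = v
    · subst hbv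
      rw [pe_rev hsub hb (by omega)]
      exact hends (b, w) hvwI k le_rfl
    · exact hends (w, b) ((memI _).2 (Or.inr ⟨rfl, hb, hbv⟩)) 0 (by omega)
end

section
/- Let r ≥ 1, let G be an r-regular finite simple graph on n vertices, k ≥ 0 an integer, S(G) the 3k-subdivision of G, and P a perfect edge dominating set of S(G). Then |P| ≥ (nr/(2(2r-1)))·(2rk - k + 1). -/
lemma path_count (f : ℕ → ℕ) (hf : ∀ i, f i ≤ 1) (k : ℕ)
    (h : ∀ i, i + 2 ≤ 3 * k → 1 ≤ f i + f (i+1) + f (i+2)) :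
    k + 1 ≤ ∑ i ∈ Finset.range (3 * k + 1), f i ∨
    (∑ i ∈ Finset.range (3 * k + 1), f i = k ∧ f 0 = 0 ∧ f (3 * k) = 0 ∧
      (1 ≤ k → f 1 = 1 → f (3 * k - 1) = 0)) := by
  induction k with
  | zero => have := hf 0; simp; omega
  | succ k ih =>
    have ih := ih (fun i hi => h i (by omega))
    have e : 3 * (k+1) + 1 = 3 * k + 1 + 1 + 1 + 1 := by ring
    rw [e, Finset.sum_range_succ, Finset.sum_range_succ, Finset.sum_range_succ]
    have e2 : 3 * (k+1) = 3 * k + 3 := by ring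
    have e3 : 3 * (k+1) - 1 = 3 * k + 2 := by omega
    rw [e3, e2]
    have h1 := h (3*k+1) (by omega)
    have h0 := h (3*k) (by omega)
    have a0 := hf (3*k)
    have a1 := hf (3*k+1)
    have a2 := hf (3*k+2)
    have a3 := hf (3*k+3)
    simp only [Nat.add_assoc, Nat.reduceAdd] at *
    rcases Nat.eq_zero_or_pos k with rfl | hk
    · simp at *
      omega
    · have h2 := h (3*k-1) (by omega)
      rw [show 3*k-1+1 = 3*k by omega, show 3*k-1+2 = 3*k+1 by omega] at h2
      have a4 := hf (3*k-1)
      omega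

section sub
variable {V W : Type*} {G : SimpleGraph V} {k : ℕ} {H : SimpleGraph W} {ι : V → W}
  {p : V → V → ℕ → W}

lemma sub_edge_rev (hs : IsSubdivision G k H ι p) {v w : V} (h : G.Adj v w) {i : ℕ}
    (hi : i ≤ 3 * k) :
    s(p v w i, p v w (i+1)) = s(p w v (3*k-i), p w v (3*k-i+1)) := by
  have h1 := hs.2.2.1 v w h i (by omega)
  have h2 := hs.2.2.1 v w h (i+1) (by omega)
  rw [h1, h2, Sym2.eq_swap, show 3 * k + 1 - (i + 1) = 3 * k - i by omega,
    show 3 * k + 1 - i = 3 * k - i + 1 by omega]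

lemma sub_edge_at (hs : IsSubdivision G k H ι p) {e : Sym2 W} (he : e ∈ H.edgeSet) {u : W}
    (hu : u ∈ e) : ∃ a b j, G.Adj a b ∧ j ≤ 3 * k ∧ u = p a b j ∧
      e = s(p a b j, p a b (j+1)) := by
  have key : ∃ a b j, G.Adj a b ∧ j ≤ 3 * k ∧ e = s(p a b j, p a b (j+1)) := by
    induction e with
    | _ x y =>
      rw [SimpleGraph.mem_edgeSet, hs.2.2.2.2.2.2.2 x y] at he
      obtain ⟨a, b, j, hab, hj, (⟨rfl, rfl⟩ | ⟨rfl, rfl⟩)⟩ := he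
      · exact ⟨a, b, j, hab, hj, rfl⟩
      · exact ⟨a, b, j, hab, hj, Sym2.eq_swap⟩
  obtain ⟨a, b, j, hab, hj, rfl⟩ := key
  rw [Sym2.mem_iff] at hu
  rcases hu with rfl | rfl
  · exact ⟨a, b, j, hab, hj, rfl, rfl⟩
  · refine ⟨b, a, 3*k-j, hab.symm, by omega, ?_, sub_edge_rev hs hab hj⟩
    rw [hs.2.2.1 a b hab (j+1) (by omega)]
    congr 1; omega

lemma sub_at_ext (hs : IsSubdivision G k H ι p) {e : Sym2 W} (he : e ∈ H.edgeSet) {v : V}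
    (hu : ι v ∈ e) : ∃ b, G.Adj v b ∧ e = s(p v b 0, p v b 1) := by
  obtain ⟨a, b, j, hab, hj, hv, rfl⟩ := sub_edge_at hs he hu
  rcases Nat.eq_zero_or_pos j with rfl | hj0
  · rw [(hs.2.1 a b hab).1] at hv
    obtain rfl := hs.1 hv
    exact ⟨b, hab, rfl⟩
  · exact absurd ⟨v, hv⟩ (hs.2.2.2.2.1 a b hab j hj0 (by omega))

lemma sub_at_int (hs : IsSubdivision G k H ι p) {e : Sym2 W} (he : e ∈ H.edgeSet) {v w : V}
    (hvw : G.Adj v w) {i : ℕ} (hi : i + 1 < 3 * k + 1)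
    (hu : p v w (i+1) ∈ e) :
    e = s(p v w i, p v w (i+1)) ∨ e = s(p v w (i+1), p v w (i+2)) := by
  obtain ⟨a, b, j, hab, hj, hv, rfl⟩ := sub_edge_at hs he hu
  rcases Nat.eq_zero_or_pos j with rfl | hj0
  · rw [(hs.2.1 a b hab).1] at hv
    exact absurd ⟨a, hv.symm⟩ (hs.2.2.2.2.1 v w hvw (i+1) (by omega) hi)
  · have := hs.2.2.2.2.2.1 v w a b hvw hab (i+1) j (by omega) hi hj0 (by omega) hv
    rw [Sym2.eq_iff] at this
    rcases this with ⟨rfl, rfl⟩ | ⟨rfl, rfl⟩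
    · have := hs.2.2.2.1 _ _ hvw _ (by omega) _ (by omega) hv
      subst this
      exact Or.inr rfl
    · left
      rw [hs.2.2.1 _ _ hab j (by omega)] at hv
      have := hs.2.2.2.1 _ _ hvw _ (by omega) _ (by omega) hv
      rw [sub_edge_rev hs hab hj]
      rw [show 3 * k - j = i by omega]

lemma sub_edge_inj (hs : IsSubdivision G k H ι p) {v w a b : V} {i j : ℕ}
    (hvw : G.Adj v w) (hab : G.Adj a b) (hi : i ≤ 3 * k) (hj : j ≤ 3 * k)
    (h : s(p v w i, p v w (i+1)) = s(p a b j, p a b (j+1))) :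
    (a = v ∧ b = w ∧ j = i) ∨ (a = w ∧ b = v ∧ j = 3 * k - i) := by
  have hv : s(v, w) = s(a, b) := by
    rcases Nat.eq_zero_or_pos k with rfl | hk
    · obtain rfl : i = 0 := by omega
      obtain rfl : j = 0 := by omega
      have h1 := hs.2.1 v w hvw
      have h2 := hs.2.1 a b hab
      simp only [Nat.mul_zero, Nat.zero_add] at h1 h2 h
      rw [h1.1, h1.2, h2.1, h2.2] at h
      have : Sym2.map ι s(v, w) = Sym2.map ι s(a, b) := h
      exact Sym2.map.injective hs.1 this
    · have key : ∀ m, 0 < m → m < 3*k+1 → p v w m ∈ s(p a b j, p a b (j+1)) →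
          s(v, w) = s(a, b) := by
        intro m hm0 hm hmem
        have : ∃ l ≤ 3 * k + 1, p v w m = p a b l := by
          rcases Sym2.mem_iff.1 hmem with h | h
          · exact ⟨j, by omega, h⟩
          · exact ⟨j+1, by omega, h⟩
        obtain ⟨l, hl, hml⟩ := this
        have hnr := hs.2.2.2.2.1 v w hvw m hm0 hm
        have hl0 : l ≠ 0 := by
          rintro rfl
          exact hnr ⟨a, by rw [hml, (hs.2.1 a b hab).1]⟩
        have hl1 : l ≠ 3 * k + 1 := by
          rintro rfl
          exact hnr ⟨b, by rw [hml, (hs.2.1 a b hab).2]⟩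
        exact hs.2.2.2.2.2.1 v w a b hvw hab m l hm0 hm (by omega) (by omega) hml
      rcases Nat.eq_zero_or_pos i with rfl | hi0
      · exact key 1 (by omega) (by omega) (by rw [← h]; simp)
      · exact key i hi0 (by omega) (by rw [← h]; simp)
  have fin : ∀ j ≤ 3 * k, s(p v w i, p v w (i+1)) = s(p v w j, p v w (j+1)) → j = i := by
    intro j hj h
    have inj := hs.2.2.2.1 v w hvw
    rcases Sym2.eq_iff.1 h with ⟨h1, h2⟩ | ⟨h1, h2⟩
    · exact (inj _ (by omega) _ (by omega) h1).symm
    · have := inj _ (by omega) _ (by omega) h1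
      have := inj _ (by omega) _ (by omega) h2
      omega
  rcases Sym2.eq_iff.1 hv with ⟨rfl, rfl⟩ | ⟨rfl, rfl⟩
  · exact Or.inl ⟨rfl, rfl, fin j hj h⟩
  · rw [sub_edge_rev hs hab hj] at h
    have := fin _ (by omega) h
    exact Or.inr ⟨rfl, rfl, by omega⟩

open Classical in
lemma sub_path (hs : IsSubdivision G k H ι p) {P : Set (Sym2 W)} (hP : IsPEDS H P)
    {v w : V} (hvw : G.Adj v w) :
    k + 1 ≤ ∑ i ∈ Finset.range (3 * k + 1), (if s(p v w i, p v w (i+1)) ∈ P then 1 else 0) ∨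
    (∑ i ∈ Finset.range (3 * k + 1), (if s(p v w i, p v w (i+1)) ∈ P then 1 else 0) = k ∧
      s(p v w 0, p v w 1) ∉ P ∧
      ((∃ x, G.Adj v x ∧ s(p v x 0, p v x 1) ∈ P) ∨
       (∃ x, G.Adj w x ∧ s(p w x 0, p w x 1) ∈ P))) := by
  have hedge : ∀ i ≤ 3 * k, s(p v w i, p v w (i+1)) ∈ H.edgeSet := by
    intro i hi
    rw [SimpleGraph.mem_edgeSet, hs.2.2.2.2.2.2.2]
    exact ⟨v, w, i, hvw, hi, Or.inl ⟨rfl, rfl⟩⟩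
  have dom : ∀ i ≤ 3 * k, s(p v w i, p v w (i+1)) ∉ P →
      ∃ e ∈ P, p v w i ∈ e ∨ p v w (i+1) ∈ e := by
    intro i hi hn
    obtain ⟨e, ⟨heP, u, hu, hu'⟩, -⟩ := hP.2 _ (hedge i hi) hn
    refine ⟨e, heP, ?_⟩
    rcases Sym2.mem_iff.1 hu' with rfl | rfl
    · exact Or.inl hu
    · exact Or.inr hu
  have e0 := (hs.2.1 v w hvw).1
  have e1 := (hs.2.1 v w hvw).2
  have := path_count (fun i => if s(p v w i, p v w (i+1)) ∈ P then 1 else 0)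
    (fun i => by split_ifs <;> simp) k (by
      intro i hi
      by_contra hcon
      have hn0 : s(p v w i, p v w (i+1)) ∉ P := by
        intro h; apply hcon; simp only [if_pos h]; omega
      have hn1 : s(p v w (i+1), p v w (i+2)) ∉ P := by
        intro h; apply hcon; simp only [if_pos h]; omega
      have hn2 : s(p v w (i+2), p v w (i+3)) ∉ P := by
        intro h; apply hcon; simp only [if_pos h]; omega
      obtain ⟨e, heP, he | he⟩ := dom (i+1) (by omega) hn1
      · rcases sub_at_int hs (hP.1 heP) hvw (by omega) he with rfl | rfl
        · exact hn0 heP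
        · exact hn1 heP
      · rcases sub_at_int hs (hP.1 heP) hvw (by omega) he with rfl | rfl
        · exact hn1 heP
        · exact hn2 heP)
  rcases this with h | ⟨h1, h2, h3, h4⟩
  · exact Or.inl h
  · right
    have n0 : s(p v w 0, p v w 1) ∉ P := by
      intro h; simp [h] at h2
    have n3 : s(p v w (3*k), p v w (3*k+1)) ∉ P := by
      intro h; simp [h] at h3
    refine ⟨h1, n0, ?_⟩
    have endw : ∀ e ∈ P, p v w (3*k+1) ∈ e → (∃ x, G.Adj w x ∧ s(p w x 0, p w x 1) ∈ P) := by
      intro e he hm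
      rw [e1] at hm
      obtain ⟨b, hb, rfl⟩ := sub_at_ext hs (hP.1 he) hm
      exact ⟨b, hb, he⟩
    obtain ⟨e, heP, he | he⟩ := dom 0 (by omega) n0
    · left
      rw [e0] at he
      obtain ⟨b, hb, rfl⟩ := sub_at_ext hs (hP.1 heP) he
      exact ⟨b, hb, heP⟩
    · right
      rcases Nat.eq_zero_or_pos k with rfl | hk
      · exact endw e heP he
      · have m1 : s(p v w 1, p v w 2) ∈ P := by
          rcases sub_at_int hs (hP.1 heP) hvw (by omega) he with rfl | rfl
          · exact absurd heP n0
          · exact heP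
        have h4 := h4 hk (by simp [m1])
        have n4 : s(p v w (3*k-1), p v w (3*k-1+1)) ∉ P := by
          intro h; simp [h] at h4
        obtain ⟨e', heP', he' | he'⟩ := dom (3*k) le_rfl n3
        · rw [show 3*k = 3*k-1+1 by omega] at he'
          rcases sub_at_int hs (hP.1 heP') hvw (by omega) he' with rfl | rfl
          · exact absurd heP' n4
          · rw [show 3*k-1+1 = 3*k by omega, show 3*k-1+2 = 3*k+1 by omega] at heP'
            exact absurd heP' n3
        · exact endw e' heP' he'

end sub

/-- Any perfect edge dominating set `P` of the `3k`-subdivision of an `r`-regular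
graph (`r ≥ 1`) on `n` vertices satisfies `|P| ≥ (n r / (2 (2r - 1))) (2rk - k + 1)`. -/
theorem subdivision_peds_lower_bound {V W : Type*} [Fintype V] [Fintype W]
    (r : ℕ) (hr : 1 ≤ r) (G : SimpleGraph V) (hreg : IsRegular' G r) (k : ℕ)
    (H : SimpleGraph W) (ι : V → W) (p : V → V → ℕ → W)
    (hsub : IsSubdivision G k H ι p) (P : Set (Sym2 W)) (hP : IsPEDS H P) :
    ((Fintype.card V : ℚ) * r) / (2 * (2 * r - 1)) * (2 * r * k - k + 1)
      ≤ (P.ncard : ℚ) := by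
  classical
  let A : Finset (V × V) := Finset.univ.filter (fun q => G.Adj q.1 q.2)
  let c : V × V → ℕ := fun q =>
    ∑ i ∈ Finset.range (3 * k + 1), (if s(p q.1 q.2 i, p q.1 q.2 (i+1)) ∈ P then 1 else 0)
  let D : Finset (V × V) := A.filter (fun q => k + 1 ≤ c q)
  have hA : ∀ q, q ∈ A ↔ G.Adj q.1 q.2 := fun q => by simp [A]
  have hD : ∀ q, q ∈ D ↔ G.Adj q.1 q.2 ∧ k + 1 ≤ c q := fun q => by simp [D, hA]
  have hdeg : ∀ v, (Finset.univ.filter (fun w => G.Adj v w)).card = r := by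
    intro v
    rw [← hreg v, ← Set.ncard_coe_finset]
    congr 1
    ext x; simp
  have hAcard : A.card = Fintype.card V * r := by
    have : A.card = ∑ v : V, (Finset.univ.filter (fun w => G.Adj v w)).card := by
      simp only [A, Finset.card_filter]
      rw [Fintype.sum_prod_type]
    rw [this, Finset.sum_congr rfl (fun v _ => hdeg v)]
    simp
  have csymm : ∀ v w, G.Adj v w → c (v, w) = c (w, v) := by
    intro v w h
    simp only [c]
    rw [← Finset.sum_range_reflect]
    apply Finset.sum_congr rfl
    intro i hi
    rw [Finset.mem_range] at hi
    rw [show 3 * k + 1 - 1 - i = 3 * k - i by omega, ← sub_edge_rev hsub h.symm (by omega)]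
  have h0D : ∀ v w, G.Adj v w → s(p v w 0, p v w 1) ∈ P → (v, w) ∈ D := by
    intro v w h hm
    rw [hD]
    rcases sub_path hsub hP h with h1 | ⟨_, h2, _⟩
    · exact ⟨h, h1⟩
    · exact absurd hm h2
  -- counting dominated darts
  let N : V × V → Finset (V × V) := fun q =>
    (Finset.univ.filter (fun w => G.Adj q.1 w)).image (fun x => (q.1, x)) ∪
    ((Finset.univ.filter (fun w => G.Adj q.1 w)).erase q.2).image (fun x => (x, q.1))
  have hAD : A.card ≤ D.card * (2 * r - 1) := by
    have hsubset : A ⊆ D.biUnion N := by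
      rintro ⟨v, w⟩ hvw
      rw [hA] at hvw
      simp only at hvw
      rw [Finset.mem_biUnion]
      have self : (v, w) ∈ D → ∃ a ∈ D, (v, w) ∈ N a := by
        intro h
        exact ⟨(v, w), h, by simp [N, hvw]⟩
      rcases sub_path hsub hP hvw with h | ⟨_, _, ⟨x, hx, hm⟩ | ⟨x, hx, hm⟩⟩
      · exact self ((hD _).2 ⟨hvw, h⟩)
      · exact ⟨(v, x), h0D _ _ hx hm, by simp [N, hvw]⟩
      · have hwx := h0D _ _ hx hm
        by_cases hxv : x = v
        · subst hxv
          apply self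
          rw [hD] at hwx ⊢
          exact ⟨hvw, by rw [csymm _ _ hvw]; exact hwx.2⟩
        · refine ⟨(w, x), hwx, ?_⟩
          simp only [N, Finset.mem_union, Finset.mem_image]
          right
          exact ⟨v, by simp [hvw.symm, Ne.symm hxv], rfl⟩
    refine (Finset.card_le_card hsubset).trans (Finset.card_biUnion_le_card_mul _ _ _ ?_)
    intro q hq
    refine (Finset.card_union_le _ _).trans ?_
    have h1 := (Finset.card_image_le (s := Finset.univ.filter (fun w => G.Adj q.1 w))
      (f := fun x => (q.1, x)))
    have h2 := (Finset.card_image_le (s := (Finset.univ.filter (fun w => G.Adj q.1 w)).erase q.2)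
      (f := fun x => (x, q.1)))
    rw [Finset.card_erase_of_mem (by simpa using ((hD _).1 hq).1)] at h2
    rw [hdeg] at h1 h2
    omega
  have hsum1 : A.card * k + D.card ≤ ∑ q ∈ A, c q := by
    have : A.card * k + D.card = ∑ q ∈ A, (k + if k + 1 ≤ c q then 1 else 0) := by
      rw [Finset.sum_add_distrib, Finset.sum_const, smul_eq_mul, ← Finset.card_filter]
    rw [this]
    apply Finset.sum_le_sum
    intro q hq
    split_ifs with h
    · exact h
    · rcases sub_path hsub hP ((hA q).1 hq) with h1 | ⟨h1, _⟩
      · exact absurd h1 h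
      · exact h1.ge
  have hsum2 : ∑ q ∈ A, c q ≤ 2 * P.ncard := by
    let T : Finset ((V × V) × ℕ) := (A ×ˢ Finset.range (3 * k + 1)).filter
      (fun t => s(p t.1.1 t.1.2 t.2, p t.1.1 t.1.2 (t.2+1)) ∈ P)
    have hT : ∑ q ∈ A, c q = T.card := by
      simp only [T, c, Finset.card_filter]
      rw [Finset.sum_product]
    have hTm : ∀ t, t ∈ T ↔ (G.Adj t.1.1 t.1.2 ∧ t.2 ≤ 3 * k) ∧
        s(p t.1.1 t.1.2 t.2, p t.1.1 t.1.2 (t.2+1)) ∈ P := by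
      intro t
      simp only [T, Finset.mem_filter, Finset.mem_product, hA, Finset.mem_range, Nat.lt_succ_iff]
    rw [hT, Set.ncard_eq_toFinset_card']
    apply Finset.card_le_mul_card_image_of_maps_to
      (f := fun t => s(p t.1.1 t.1.2 t.2, p t.1.1 t.1.2 (t.2+1)))
    · intro t ht
      simpa using ((hTm t).1 ht).2
    · intro e _
      rcases Finset.eq_empty_or_nonempty
        (T.filter (fun t => s(p t.1.1 t.1.2 t.2, p t.1.1 t.1.2 (t.2+1)) = e)) with h | ⟨t, ht⟩
      · rw [h]; simp
      · refine le_trans (Finset.card_le_card (t := {t, ((t.1.2, t.1.1), 3 * k - t.2)}) ?_)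
          Finset.card_le_two
        intro u hu
        rw [Finset.mem_filter, hTm] at ht hu
        have := sub_edge_inj hsub ht.1.1.1 hu.1.1.1 ht.1.1.2 hu.1.1.2 (ht.2.trans hu.2.symm)
        rw [Finset.mem_insert, Finset.mem_singleton]
        rcases this with ⟨h1, h2, h3⟩ | ⟨h1, h2, h3⟩
        · exact Or.inl (Prod.ext (Prod.ext h1 h2) h3)
        · exact Or.inr (Prod.ext (Prod.ext h1 h2) h3)
  have hr' : (1:ℚ) ≤ r := by exact_mod_cast hr
  have q1 : (Fintype.card V : ℚ) * r ≤ D.card * (2 * r - 1) := by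
    rw [hAcard] at hAD
    have : ((2 * r - 1 : ℕ) : ℚ) = 2 * r - 1 := by
      rw [Nat.cast_sub (by omega)]; simp
    rw [← this]
    exact_mod_cast hAD
  have q2 : (Fintype.card V : ℚ) * r * k + D.card ≤ 2 * P.ncard := by
    have := hsum1.trans hsum2
    rw [hAcard] at this
    exact_mod_cast this
  have hpos : (0:ℚ) < 2 * r - 1 := by linarith
  rw [div_mul_eq_mul_div, div_le_iff₀ (by positivity)]
  nlinarith [mul_le_mul_of_nonneg_right q2 hpos.le]
end
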